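/- Let {X_i}_{i=1}^n be an R^d-valued martingale difference sequence adapted to {F_i}_{i=1}^n with d > 1, F_0 ⊂ F_1 a sub-σ-field with E[X_1 | F_0] = 0 a.s. and E[‖X_i‖_∞³ | F_0] < ∞ a.s., S := Σ_{i≤n} X_i, V a version of E[S Sᵀ | F_0], and T a random vector whose conditional distribution given F_0 is N(0, V). Let v̲² := min_{1≤j≤d} [V]_{jj} and v̄² := max_{1≤j≤d} [V]_{jj}, and assume v̲ > 0 a.s. Define τ := v̄/v̲, β' := β/v̲², Γ' := Γ/v̲³, where β := Σ_{i=1}^n E[‖E[X_i X_iᵀ | F_{i−1}] − Σ_i‖_{e,1} | F_0], Γ := Σ_{i=1}^n (E[‖X_i‖_∞³ | F_0] + (σ̄_i² ln⁺ d)^{3/2}), Σ_i = E[X_i X_iᵀ | F_0] a.s., and σ̄_i² := max_{1≤j≤d} [Σ_i]_{jj}. Then there exists a universal constant C > 0 such that for every α ∈ [0, 1/4], almost surely, ρ(M(S), M(T) | F_0) ≤ C[(ln d)^α β' sqrt(τ/Γ') + (ln(dn))^{1−α/2} (τ³Γ')^{1/4}], where M(x) := max_{1≤j≤d} x_j and ρ(X,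 Y | G) := sup_{r∈R} |F_X(·, r) − F_Y(·, r)| is the conditional Kolmogorov distance, with F_X, F_Y regular conditional cdfs of X and Y given G. -/

import Mathlib

/-!
# A Berry–Esseen bound for maxima of martingales

The proof is a conditional Lindeberg exchange combined with Gaussian anticoncentration.

For each increment `X i` one chooses a version `Q i` of its conditional covariance given `F 0` that
is positive semidefinite at every point (`exists_condCov`). By orthogonality of the increments the
sum of the `Q i` is a version of `V` (`condCov_sum`), so the conditional law of `T` is the Gaussian
law `gaussN (∑ i, Q i)` (`condCdf_gauss`).

The indicator of `{max ≤ r}` is replaced by a smooth cutoff of the soft maximum at scale `δ`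
(`exists_test`). Its Hessian entries are `O(log d / δ²)` and its third-order Taylor remainder at an
increment `u` is `O(log² d / δ³) ‖u‖³`, in the maximum norm. Exchanging the increments of the
martingale one at a time for Gaussian ones of covariance `Q i` (`IsTest.step`, `IsTest.compare`)
costs the Hessian bound times `β`, because only the conditional covariances given `F 0`, not those
given `F (i - 1)`, are matched, plus the remainder constant times `Γ`. The Gaussian part of the
remainder is the third moment of a Gaussian maximum norm (`gaussN_third`), which is where
`(σ̄² ln⁺ d)^{3/2}` comes from.

The distribution functions of the two maxima therefore interlace up to a shift by `2δ`
(`cdf_interlace`), and Nazarov's inequality (`anticoncentration`) bounds the cost of the shift by a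
multiple of `δ √(log d) / v̲`, where `v̲²` is the smallest diagonal entry of `V`. Taking for `δ` a
level of the order of `(v̲ Γ)^{1/4} (log d)^{(1-α)/2}` gives the bound (`optimise`). Levels and
thresholds are kept rational, so that only countably many null sets are discarded; right continuity
of the conditional distribution functions recovers every real threshold.
-/

open MeasureTheory ProbabilityTheory Real

/-- `ln⁺ x = max(1, ln x)`. -/
noncomputable def lnPlus (x : ℝ) : ℝ := max 1 (Real.log x)

namespace MaxMart

/-! ### Centred Gaussian vectors -/

section Gaussian
open scoped MatrixOrder Matrix.Norms.L2Operator
open Matrix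

variable {d : ℕ}

/-- The centred Gaussian law on `ℝ^d` with covariance matrix `P`, as the image of a standard Gaussian
vector under the positive square root of `P`. When `P` is not positive semidefinite the square root
is `0` by convention, and the law is the Dirac mass at `0`. -/
noncomputable def gaussN (P : Matrix (Fin d) (Fin d) ℝ) : Measure (Fin d → ℝ) :=
  (Measure.pi (fun _ : Fin d => gaussianReal 0 1)).map (fun g => CFC.sqrt P *ᵥ g)

instance (P : Matrix (Fin d) (Fin d) ℝ) : IsProbabilityMeasure (gaussN P) :=
  Measure.isProbabilityMeasure_map (by fun_prop)

/-- A measurable family of matrices has a measurable family of square roots, whether or not the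
matrices are positive semidefinite: the square root is continuous on the closed positive
semidefinite cone and vanishes off it. -/
lemma measurable_sqrt {Ω : Type*} {m : MeasurableSpace Ω}
    {P : Ω → Matrix (Fin d) (Fin d) ℝ} (hP : ∀ j k, Measurable (fun ω => P ω j k)) (j k : Fin d) :
    Measurable (fun ω => CFC.sqrt (P ω) j k) := by
  classical
  let _ : MeasurableSpace (Matrix (Fin d) (Fin d) ℝ) :=
    inferInstanceAs (MeasurableSpace (Fin d → Fin d → ℝ))
  have : BorelSpace (Matrix (Fin d) (Fin d) ℝ) := inferInstanceAs (BorelSpace (Fin d → Fin d → ℝ))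
  have hcl : IsClosed {a : Matrix (Fin d) (Fin d) ℝ | 0 ≤ a} := by
    have : {a : Matrix (Fin d) (Fin d) ℝ | 0 ≤ a} =
        {a | aᵀ = a} ∩ ⋂ x : Fin d → ℝ, {a | 0 ≤ x ⬝ᵥ (a *ᵥ x)} := by
      ext a
      simp only [Set.mem_ofPred_eq, Set.mem_inter_iff, Set.mem_iInter]
      rw [Matrix.nonneg_iff_posSemidef, Matrix.posSemidef_iff_dotProduct_mulVec]
      simp [Matrix.IsHermitian]
    rw [this]
    refine (isClosed_eq (by fun_prop) continuous_id).inter (isClosed_iInter fun x => ?_)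
    exact isClosed_le continuous_const (by fun_prop)
  have h := CFC.continuousOn_sqrt (A := Matrix (Fin d) (Fin d) ℝ)
  have h2 : (fun P : Matrix (Fin d) (Fin d) ℝ => CFC.sqrt P) =
      Set.piecewise {a | 0 ≤ a} (fun P => CFC.sqrt P) (fun _ => 0) := by
    funext P
    by_cases hP : P ∈ {a : Matrix (Fin d) (Fin d) ℝ | 0 ≤ a}
    · rw [Set.piecewise_eq_of_mem _ _ _ hP]
    · rw [Set.piecewise_eq_of_notMem _ _ _ hP, CFC.sqrt, cfcₙ_apply_of_not_predicate _ hP]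
  have h3 : Measurable (fun P : Matrix (Fin d) (Fin d) ℝ => CFC.sqrt P) := by
    rw [h2]
    exact h.measurable_piecewise continuousOn_const hcl.measurableSet
  have hP' : Measurable P := measurable_pi_lambda _ fun j => measurable_pi_lambda _ fun k => hP j k
  exact (measurable_pi_apply k).comp ((measurable_pi_apply j).comp (h3.comp hP'))

lemma continuous_cf (t : Fin d → ℝ) :
    Continuous (fun w : Fin d → ℝ => Complex.exp (Complex.I * ((∑ j, t j * w j : ℝ) : ℂ))) := by
  fun_prop

/-- A finite measure on `ℝ^d` is determined by its characteristic function. -/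
lemma ext_cf {ν₁ ν₂ : Measure (Fin d → ℝ)} [IsFiniteMeasure ν₁] [IsFiniteMeasure ν₂]
    (h : ∀ t : Fin d → ℝ, ∫ w, Complex.exp (Complex.I * ((∑ j, t j * w j : ℝ) : ℂ)) ∂ν₁
      = ∫ w, Complex.exp (Complex.I * ((∑ j, t j * w j : ℝ) : ℂ)) ∂ν₂) : ν₁ = ν₂ := by
  apply Measure.ext_of_charFunDual
  funext L
  have hL : ∀ w : Fin d → ℝ, L w = ∑ j, L (Pi.single j 1) * w j := by
    intro w
    conv_lhs => rw [pi_eq_sum_univ' w]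
    rw [map_sum]
    exact Finset.sum_congr rfl fun j _ => by rw [map_smul, smul_eq_mul, mul_comm]
  rw [charFunDual_apply, charFunDual_apply]
  have hL' : ∀ w : Fin d → ℝ, Complex.exp ((L w : ℂ) * Complex.I)
      = Complex.exp (Complex.I * ((∑ j, L (Pi.single j 1) * w j : ℝ) : ℂ)) := fun w => by
    rw [mul_comm, ← hL]
  simp only [hL']
  exact h _

/-- The characteristic function of the centred Gaussian law. -/
lemma cf_gaussN {P : Matrix (Fin d) (Fin d) ℝ} (hP : P.PosSemidef) (t : Fin d → ℝ) :
    ∫ w, Complex.exp (Complex.I * ((∑ j, t j * w j : ℝ) : ℂ)) ∂(gaussN P)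
      = Complex.exp (((-(1 / 2) * ∑ j, ∑ k, t j * P j k * t k : ℝ) : ℂ)) := by
  set A := CFC.sqrt P with hA
  have hAA : A * A = P := CFC.sqrt_mul_sqrt_self _ hP.nonneg
  have hsym : Aᵀ = A := by
    have : IsSelfAdjoint A := (CFC.sqrt_nonneg P).isSelfAdjoint
    have := this.star_eq
    rwa [Matrix.star_eq_conjTranspose, Matrix.conjTranspose_eq_transpose_of_trivial] at this
  rw [gaussN, integral_map (by fun_prop) (continuous_cf t).aestronglyMeasurable]
  have h1 : ∀ g : Fin d → ℝ, (∑ j, t j * (A *ᵥ g) j) = ∑ l, (A *ᵥ t) l * g l := by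
    intro g
    have : t ⬝ᵥ (A *ᵥ g) = (A *ᵥ t) ⬝ᵥ g := by
      rw [Matrix.dotProduct_mulVec, ← Matrix.mulVec_transpose, hsym]
    exact this
  simp_rw [← hA, h1]
  have h2 : ∀ g : Fin d → ℝ, Complex.exp (Complex.I * ((∑ l, (A *ᵥ t) l * g l : ℝ) : ℂ))
      = ∏ l, Complex.exp (((A *ᵥ t) l : ℂ) * (g l : ℂ) * Complex.I) := by
    intro g
    rw [← Complex.exp_sum]; congr 1; push_cast; rw [Finset.mul_sum]
    exact Finset.sum_congr rfl fun _ _ => by ring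
  simp_rw [h2]
  rw [integral_fintype_prod_eq_prod (𝕜 := ℂ) (μ := fun _ : Fin d => gaussianReal 0 1)
    (f := fun l (x : ℝ) => Complex.exp (((A *ᵥ t) l : ℂ) * (x : ℂ) * Complex.I))]
  have h3 : ∀ s : ℝ, ∫ x, Complex.exp ((s : ℂ) * (x : ℂ) * Complex.I) ∂(gaussianReal 0 1)
      = Complex.exp (-(s:ℂ)^2/2) := by
    intro s
    rw [← charFun_apply_real, charFun_gaussianReal]; congr 1; simp; ring
  simp_rw [h3]
  rw [← Complex.exp_sum]; congr 1
  have h4 : ∑ l, (A *ᵥ t) l ^ 2 = ∑ j, ∑ k, t j * P j k * t k := by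
    have : (A *ᵥ t) ⬝ᵥ (A *ᵥ t) = t ⬝ᵥ (P *ᵥ t) := by
      rw [← hAA, ← Matrix.mulVec_mulVec, Matrix.dotProduct_mulVec t, ← Matrix.mulVec_transpose, hsym]
    have h5 : ∑ l, (A *ᵥ t) l ^ 2 = (A *ᵥ t) ⬝ᵥ (A *ᵥ t) :=
      Finset.sum_congr rfl fun _ _ => sq _
    rw [h5, this]
    simp only [dotProduct, Matrix.mulVec, Finset.mul_sum]
    exact Finset.sum_congr rfl fun _ _ => Finset.sum_congr rfl fun _ _ => by ring
  rw [← h4]; push_cast; rw [Finset.mul_sum]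
  exact Finset.sum_congr rfl fun _ _ => by ring

/-- A finite measure with a centred Gaussian characteristic function is that Gaussian law. -/
lemma eq_gaussN {P : Matrix (Fin d) (Fin d) ℝ} (hP : P.PosSemidef) (ν : Measure (Fin d → ℝ))
    [IsFiniteMeasure ν]
    (h : ∀ t : Fin d → ℝ, ∫ w, Complex.exp (Complex.I * ((∑ j, t j * w j : ℝ) : ℂ)) ∂ν
      = Complex.exp (((-(1 / 2) * ∑ j, ∑ k, t j * P j k * t k : ℝ) : ℂ))) : ν = gaussN P :=
  ext_cf fun t => by rw [h t, cf_gaussN hP]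

lemma gaussN_zero : gaussN (0 : Matrix (Fin d) (Fin d) ℝ) = Measure.dirac 0 := by
  rw [gaussN, CFC.sqrt_zero]; simp

/-- Independent centred Gaussian vectors add their covariances. -/
lemma gaussN_add {P Q : Matrix (Fin d) (Fin d) ℝ} (hP : P.PosSemidef) (hQ : Q.PosSemidef) :
    gaussN (P + Q) = ((gaussN P).prod (gaussN Q)).map (fun p => p.1 + p.2) := by
  have : IsProbabilityMeasure (((gaussN P).prod (gaussN Q)).map (fun p => p.1 + p.2)) :=
    Measure.isProbabilityMeasure_map (by fun_prop)
  refine (eq_gaussN (hP.add hQ) _ fun t => ?_).symm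
  rw [integral_map (by fun_prop) (continuous_cf t).aestronglyMeasurable]
  have h : ∀ p : (Fin d → ℝ) × (Fin d → ℝ),
      Complex.exp (Complex.I * ((∑ j, t j * (p.1 + p.2) j : ℝ) : ℂ))
      = Complex.exp (Complex.I * ((∑ j, t j * p.1 j : ℝ) : ℂ))
        * Complex.exp (Complex.I * ((∑ j, t j * p.2 j : ℝ) : ℂ)) := by
    intro p
    rw [← Complex.exp_add, ← mul_add, ← Complex.ofReal_add, ← Finset.sum_add_distrib]
    simp [mul_add]
  simp_rw [h]
  rw [integral_prod_mul (L := ℂ)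
    (f := fun w : Fin d → ℝ => Complex.exp (Complex.I * ((∑ j, t j * w j : ℝ) : ℂ)))
    (g := fun w : Fin d → ℝ => Complex.exp (Complex.I * ((∑ j, t j * w j : ℝ) : ℂ))),
    cf_gaussN hP, cf_gaussN hQ, ← Complex.exp_add, ← Complex.ofReal_add, ← mul_add,
    ← Finset.sum_add_distrib]
  simp_rw [← Finset.sum_add_distrib]
  simp [mul_add, add_mul]

/-- Smoothing at a random point `S` by a Gaussian law with random covariance `P` gives a random
variable measurable with respect to any σ-field making `S` and `P` measurable. -/
lemma measurable_integral_gaussN {Ω : Type*} {m : MeasurableSpace Ω}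
    {P : Ω → Matrix (Fin d) (Fin d) ℝ} (hP : ∀ j k, Measurable (fun ω => P ω j k)) {S : Ω → Fin d → ℝ} (hS : Measurable S)
    {ψ : (Fin d → ℝ) → ℝ} (hψ : Measurable ψ) :
    StronglyMeasurable (fun ω => ∫ w, ψ (S ω + w) ∂(gaussN (P ω))) := by
  have h : (fun ω => ∫ w, ψ (S ω + w) ∂(gaussN (P ω))) =
      fun ω => ∫ g, ψ (S ω + CFC.sqrt (P ω) *ᵥ g) ∂(Measure.pi (fun _ : Fin d => gaussianReal 0 1)) := by
    funext ω
    rw [gaussN, integral_map (by fun_prop)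
      (f := fun w => ψ (S ω + w)) (hψ.comp (measurable_const_add (S ω))).aestronglyMeasurable]
  rw [h]
  refine StronglyMeasurable.integral_prod_right (f := fun ω (g : Fin d → ℝ) => ψ (S ω + CFC.sqrt (P ω) *ᵥ g)) ?_
  apply Measurable.stronglyMeasurable
  refine hψ.comp (Measurable.add (hS.comp measurable_fst) ?_)
  refine measurable_pi_lambda _ fun j => ?_
  simp only [Matrix.mulVec, dotProduct]
  refine Finset.measurable_sum _ fun k _ => ?_
  refine Measurable.mul ?_ (by fun_prop)
  exact (measurable_sqrt hP j k).comp measurable_fst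

/-- The image of a Gaussian vector under a linear form is a real Gaussian variable. -/
lemma gaussN_map_lin {P : Matrix (Fin d) (Fin d) ℝ} (hP : P.PosSemidef) (t : Fin d → ℝ) :
    (gaussN P).map (fun w => ∑ j, t j * w j)
      = gaussianReal 0 (∑ j, ∑ k, t j * P j k * t k).toNNReal := by
  have hm : Measurable (fun w : Fin d → ℝ => ∑ j, t j * w j) := by fun_prop
  have : IsProbabilityMeasure ((gaussN P).map (fun w => ∑ j, t j * w j)) :=
    Measure.isProbabilityMeasure_map hm.aemeasurable
  have hnn : 0 ≤ ∑ j, ∑ k, t j * P j k * t k := by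
    have h := hP.dotProduct_mulVec_nonneg t
    simp only [star_trivial, dotProduct, Matrix.mulVec, Finset.mul_sum] at h
    refine h.trans_eq (Finset.sum_congr rfl fun _ _ => Finset.sum_congr rfl fun _ _ => by ring)
  apply Measure.ext_of_charFun
  funext s
  rw [charFun_apply_real, integral_map hm.aemeasurable (by fun_prop), charFun_gaussianReal]
  have := cf_gaussN hP (fun j => s * t j)
  convert this using 1
  · congr 1; funext x; congr 1; push_cast; rw [Finset.mul_sum, Finset.sum_mul, Finset.mul_sum]
    exact Finset.sum_congr rfl fun _ _ => by ring
  · congr 1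
    have : ∑ j, ∑ k, s * t j * P j k * (s * t k) = s ^ 2 * ∑ j, ∑ k, t j * P j k * t k := by
      simp only [Finset.mul_sum]
      exact Finset.sum_congr rfl fun _ _ => Finset.sum_congr rfl fun _ _ => by ring
    rw [this]
    simp only [Complex.ofReal_zero, mul_zero, zero_mul, zero_sub]
    rw [show (((∑ j, ∑ k, t j * P j k * t k).toNNReal : ℂ)) =
      (((∑ j, ∑ k, t j * P j k * t k).toNNReal : ℝ) : ℂ) from rfl, Real.coe_toNNReal _ hnn]
    push_cast; ring

lemma gaussN_map_eval {P : Matrix (Fin d) (Fin d) ℝ} (hP : P.PosSemidef) (j : Fin d) :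
    (gaussN P).map (fun w => w j) = gaussianReal 0 (P j j).toNNReal := by
  have := gaussN_map_lin hP (Pi.single j 1)
  simpa [Pi.single_apply] using this

lemma integrable_sq_gaussianReal (v : NNReal) : Integrable (fun x : ℝ => x ^ 2) (gaussianReal 0 v) :=
  (memLp_id_gaussianReal (μ := 0) (v := v) 2).integrable_sq

lemma integral_sq_gaussianReal (v : NNReal) : ∫ x, x ^ 2 ∂(gaussianReal 0 v) = v := by
  have h := variance_fun_id_gaussianReal (μ := 0) (v := v)
  rw [variance_eq_integral (by fun_prop)] at h
  simpa using h

lemma gaussN_mean {P : Matrix (Fin d) (Fin d) ℝ} (hP : P.PosSemidef) (j : Fin d) :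
    Integrable (fun w => w j) (gaussN P) ∧ ∫ w, w j ∂(gaussN P) = 0 := by
  have hm : AEMeasurable (fun w : Fin d → ℝ => w j) (gaussN P) :=
    (measurable_pi_apply j).aemeasurable
  constructor
  · have h : Integrable (fun x : ℝ => x) ((gaussN P).map (fun w => w j)) := by
      rw [gaussN_map_eval hP]
      exact (memLp_id_gaussianReal 1).integrable le_rfl
    exact h.comp_aemeasurable hm
  · have h := integral_map (f := fun x : ℝ => x) hm (by fun_prop)
    rw [← h, gaussN_map_eval hP]; simp

/-- The entries of `P` are the second moments of `gaussN P`. -/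
lemma gaussN_cov {P : Matrix (Fin d) (Fin d) ℝ} (hP : P.PosSemidef) (j k : Fin d) :
    Integrable (fun w => w j * w k) (gaussN P) ∧ ∫ w, w j * w k ∂(gaussN P) = P j k := by
  have key : ∀ t : Fin d → ℝ, Integrable (fun w => (∑ j, t j * w j) ^ 2) (gaussN P) ∧
      ∫ w, (∑ j, t j * w j) ^ 2 ∂(gaussN P) = ∑ j, ∑ k, t j * P j k * t k := by
    intro t
    have hnn : 0 ≤ ∑ j, ∑ k, t j * P j k * t k := by
      have h := hP.dotProduct_mulVec_nonneg t
      simp only [star_trivial, dotProduct, Matrix.mulVec, Finset.mul_sum] at h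
      refine h.trans_eq (Finset.sum_congr rfl fun _ _ => Finset.sum_congr rfl fun _ _ => by ring)
    have hm : AEMeasurable (fun w : Fin d → ℝ => ∑ j, t j * w j) (gaussN P) := by
      have : Measurable (fun w : Fin d → ℝ => ∑ j, t j * w j) := by fun_prop
      exact this.aemeasurable
    constructor
    · have h := integrable_sq_gaussianReal (∑ j, ∑ k, t j * P j k * t k).toNNReal
      rw [← gaussN_map_lin hP] at h
      exact h.comp_aemeasurable hm
    · have h := integral_map (f := fun x : ℝ => x ^ 2) hm (by fun_prop)
      rw [← h, gaussN_map_lin hP, integral_sq_gaussianReal, Real.coe_toNNReal _ hnn]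
  have hsym : P k j = P j k := by
    have := hP.1.apply k j
    simpa using this.symm
  -- polarization
  have hpol : ∀ w : Fin d → ℝ, w j * w k =
      (1 / 4) * (∑ l, ((Pi.single j 1 + Pi.single k 1 : Fin d → ℝ) l) * w l) ^ 2
        - (1 / 4) * (∑ l, ((Pi.single j 1 - Pi.single k 1 : Fin d → ℝ) l) * w l) ^ 2 := by
    intro w
    simp [add_mul, sub_mul, Finset.sum_add_distrib, Finset.sum_sub_distrib, Pi.single_apply]
    ring
  obtain ⟨i1, e1⟩ := key (Pi.single j 1 + Pi.single k 1)
  obtain ⟨i2, e2⟩ := key (Pi.single j 1 - Pi.single k 1)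
  simp_rw [hpol]
  refine ⟨(i1.const_mul _).sub (i2.const_mul _), ?_⟩
  rw [integral_sub (i1.const_mul _) (i2.const_mul _), integral_const_mul, integral_const_mul,
    e1, e2]
  simp [add_mul, sub_mul, mul_add, mul_sub, Finset.sum_add_distrib, Finset.sum_sub_distrib,
    Pi.single_apply]
  rw [hsym]; ring

end Gaussian

/-! ### Anticoncentration of Gaussian maxima -/

section Anticoncentration
variable {d : ℕ}

lemma pdf_eq (x : ℝ) : gaussianPDFReal 0 1 x = (√(2 * π))⁻¹ * Real.exp (-x ^ 2 / 2) := by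
  simp [gaussianPDFReal]

lemma pdf_const_le_one : (√(2 * π))⁻¹ ≤ 1 := by
  apply inv_le_one_of_one_le₀
  rw [Real.one_le_sqrt]
  nlinarith [Real.pi_gt_three]

/-- A lower bound for the Gaussian tail (Mills' ratio). -/
lemma pdf_le_tail {κ z : ℝ} (hκ : 0 ≤ κ) (hz : z ≤ κ) :
    gaussianPDFReal 0 1 z ≤ Real.exp (3 / 2) * (1 + κ) * (gaussianReal 0 1).real (Set.Ici z) := by
  set y := max z 0 with hy
  have hy0 : 0 ≤ y := le_max_right _ _
  have hyκ : y ≤ κ := max_le hz hκ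
  set a := 1 / (1 + κ) with ha
  have ha0 : 0 < a := by positivity
  have haκ : a * (1 + κ) = 1 := by rw [ha]; field_simp
  have ha1 : a ≤ 1 := by nlinarith
  have h1 : gaussianPDFReal 0 1 z ≤ gaussianPDFReal 0 1 y := by
    rw [pdf_eq, pdf_eq]
    refine mul_le_mul_of_nonneg_left (Real.exp_le_exp.2 ?_) (by positivity)
    rcases le_total z 0 with h | h
    · rw [hy, max_eq_right h]; nlinarith [sq_nonneg z]
    · rw [hy, max_eq_left h]
  -- on `[y, y + a]` the density drops by at most the factor `exp (-3/2)`
  have h2 : Real.exp (-(3 / 2)) * gaussianPDFReal 0 1 y * a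
      ≤ (gaussianReal 0 1).real (Set.Icc y (y + a)) := by
    rw [measureReal_def, gaussianReal_apply_eq_integral _ (by norm_num),
      ENNReal.toReal_ofReal (integral_nonneg fun _ => gaussianPDFReal_nonneg _ _ _)]
    have : Real.exp (-(3 / 2)) * gaussianPDFReal 0 1 y * a
        = ∫ x in Set.Icc y (y + a), Real.exp (-(3 / 2)) * gaussianPDFReal 0 1 y := by
      simp [ha0.le, mul_comm]
    rw [this]
    refine setIntegral_mono_on (integrableOn_const (by simp)) (integrable_gaussianPDFReal 0 1).integrableOn
      measurableSet_Icc fun x hx => ?_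
    rw [pdf_eq, pdf_eq, mul_left_comm, ← Real.exp_add]
    refine mul_le_mul_of_nonneg_left (Real.exp_le_exp.2 ?_) (by positivity)
    have hx1 := hx.1
    have hx2 := hx.2
    have : y * a ≤ 1 := by nlinarith
    nlinarith
  have h3 : (gaussianReal 0 1).real (Set.Icc y (y + a)) ≤ (gaussianReal 0 1).real (Set.Ici z) :=
    measureReal_mono fun x hx => (le_max_left z 0).trans hx.1
  have h4 : Real.exp (-(3 / 2)) * gaussianPDFReal 0 1 z * a
      ≤ (gaussianReal 0 1).real (Set.Ici z) := by
    refine le_trans ?_ (h2.trans h3)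
    gcongr
  calc gaussianPDFReal 0 1 z = Real.exp (3 / 2) * (1 + κ) *
        (Real.exp (-(3 / 2)) * gaussianPDFReal 0 1 z * a) := by
        rw [Real.exp_neg, ha]; field_simp
    _ ≤ _ := by gcongr

/-- On an up-set `U` the Gaussian density below `κ` is controlled by the mass of `U`. -/
lemma upper_inter_Ioc {κ y e : ℝ} (hκ : 0 ≤ κ) (he : 0 ≤ e) {U : Set ℝ} (hU : IsUpperSet U)
    (hUm : MeasurableSet U) :
    (gaussianReal 0 1).real (U ∩ Set.Ioc y (y + e)) ≤
      e * (Real.exp (-κ ^ 2 / 2) + Real.exp (3 / 2) * (1 + κ) * (gaussianReal 0 1).real U) := by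
  set K := Real.exp (-κ ^ 2 / 2) + Real.exp (3 / 2) * (1 + κ) * (gaussianReal 0 1).real U with hK
  have hK0 : 0 ≤ K := by positivity
  have hpt : ∀ x ∈ U ∩ Set.Ioc y (y + e), gaussianPDFReal 0 1 x ≤ K := by
    intro x hx
    rcases le_total x κ with h | h
    · have h1 := pdf_le_tail hκ h
      have h2 : (gaussianReal 0 1).real (Set.Ici x) ≤ (gaussianReal 0 1).real U :=
        measureReal_mono fun w hw => hU hw hx.1
      have : Real.exp (3 / 2) * (1 + κ) * (gaussianReal 0 1).real (Set.Ici x) ≤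
        Real.exp (3 / 2) * (1 + κ) * (gaussianReal 0 1).real U := by gcongr
      have := Real.exp_pos (-κ ^ 2 / 2)
      linarith
    · have h1 : gaussianPDFReal 0 1 x ≤ Real.exp (-κ ^ 2 / 2) := by
        rw [pdf_eq]
        calc _ ≤ 1 * Real.exp (-x ^ 2 / 2) :=
              mul_le_mul_of_nonneg_right pdf_const_le_one (Real.exp_pos _).le
          _ ≤ _ := by rw [one_mul]; exact Real.exp_le_exp.2 (by nlinarith)
      have : 0 ≤ Real.exp (3 / 2) * (1 + κ) * (gaussianReal 0 1).real U := by positivity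
      linarith
  have hms : MeasurableSet (U ∩ Set.Ioc y (y + e)) := hUm.inter measurableSet_Ioc
  rw [measureReal_def, gaussianReal_apply_eq_integral _ (by norm_num),
      ENNReal.toReal_ofReal (integral_nonneg fun _ => gaussianPDFReal_nonneg _ _ _)]
  have hfin : volume (U ∩ Set.Ioc y (y + e)) ≠ ⊤ :=
    ((measure_mono Set.inter_subset_right).trans_lt (by simp)).ne
  calc ∫ x in U ∩ Set.Ioc y (y + e), gaussianPDFReal 0 1 x
      ≤ ∫ x in U ∩ Set.Ioc y (y + e), K :=
        setIntegral_mono_on (integrable_gaussianPDFReal 0 1).integrableOn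
          (integrableOn_const hfin) hms hpt
    _ = volume.real (U ∩ Set.Ioc y (y + e)) * K := by simp
    _ ≤ volume.real (Set.Ioc y (y + e)) * K :=
        mul_le_mul_of_nonneg_right (measureReal_mono Set.inter_subset_right (by simp)) hK0
    _ = e * K := by simp [he]

/-- The estimate of `upper_inter_Ioc` for a Gaussian of standard deviation `s ≥ v`. -/
lemma upper_inter_Ioc_scaled {κ r e v s : ℝ} (hκ : 0 ≤ κ) (he : 0 ≤ e) (hv : 0 < v) (hvs : v ≤ s)
    {U : Set ℝ} (hU : IsUpperSet U) (hUm : MeasurableSet U) :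
    (gaussianReal 0 (s ^ 2).toNNReal).real (U ∩ Set.Ioc r (r + e)) ≤
      e / v * (Real.exp (-κ ^ 2 / 2) +
        Real.exp (3 / 2) * (1 + κ) * (gaussianReal 0 (s ^ 2).toNNReal).real U) := by
  have hs : 0 < s := hv.trans_le hvs
  have hmap : gaussianReal 0 (s ^ 2).toNNReal = (gaussianReal 0 1).map (s * ·) := by
    rw [gaussianReal_map_const_mul]
    congr 1
    · simp
    · ext; simp [Real.coe_toNNReal _ (sq_nonneg s)]
  rw [hmap, map_measureReal_apply (by fun_prop) (hUm.inter measurableSet_Ioc),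
    map_measureReal_apply (by fun_prop) hUm, Set.preimage_inter]
  have hpre : (s * ·) ⁻¹' Set.Ioc r (r + e) = Set.Ioc (r / s) (r / s + e / s) := by
    ext x
    simp only [Set.mem_preimage, Set.mem_Ioc]
    rw [div_lt_iff₀ hs, ← add_div, le_div_iff₀ hs, mul_comm x s]
  rw [hpre]
  have hU' : IsUpperSet ((s * ·) ⁻¹' U) := fun a b hab ha => hU (mul_le_mul_of_nonneg_left hab hs.le) ha
  have := upper_inter_Ioc (κ := κ) (y := r / s) (e := e / s) hκ (by positivity) hU'
    ((measurable_const_mul s) hUm)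
  refine this.trans (mul_le_mul_of_nonneg_right ?_ (by positivity))
  gcongr

open Matrix

/-- A Gaussian vector `u` may have its `j`-th coordinate replaced by an independent copy `z`,
the other coordinates following by regression. -/
lemma gaussN_regress {P : Matrix (Fin d) (Fin d) ℝ} (hP : P.PosSemidef) (j : Fin d)
    (hj : 0 < P j j) :
    ((gaussN P).prod (gaussianReal 0 (P j j).toNNReal)).map
      (fun q : (Fin d → ℝ) × ℝ => fun k => q.1 k - P j k / P j j * q.1 j + P j k / P j j * q.2)
      = gaussN P := by
  have hm : Measurable (fun q : (Fin d → ℝ) × ℝ => fun k =>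
      q.1 k - P j k / P j j * q.1 j + P j k / P j j * q.2) := by fun_prop
  have : IsProbabilityMeasure (((gaussN P).prod (gaussianReal 0 (P j j).toNNReal)).map
      (fun q : (Fin d → ℝ) × ℝ => fun k => q.1 k - P j k / P j j * q.1 j + P j k / P j j * q.2)) :=
    Measure.isProbabilityMeasure_map hm.aemeasurable
  refine eq_gaussN hP _ fun t => ?_
  rw [integral_map hm.aemeasurable (continuous_cf t).aestronglyMeasurable]
  set c : ℝ := ∑ k, t k * (P j k / P j j) with hc
  set t' : Fin d → ℝ := fun k => t k - Pi.single (M := fun _ => ℝ) j c k with ht'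
  have h1 : ∀ q : (Fin d → ℝ) × ℝ,
      Complex.exp (Complex.I * ((∑ k, t k *
        (q.1 k - P j k / P j j * q.1 j + P j k / P j j * q.2) : ℝ) : ℂ))
      = Complex.exp (Complex.I * ((∑ k, t' k * q.1 k : ℝ) : ℂ))
        * Complex.exp ((c : ℂ) * (q.2 : ℂ) * Complex.I) := by
    intro q
    rw [← Complex.exp_add]; congr 1
    have : ∑ k, t k * (q.1 k - P j k / P j j * q.1 j + P j k / P j j * q.2)
        = ∑ k, t' k * q.1 k + c * q.2 := by
      have e1 : ∑ k, t' k * q.1 k = ∑ k, t k * q.1 k - c * q.1 j := by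
        simp [ht', sub_mul, Finset.sum_sub_distrib, Pi.single_apply]
      rw [e1, hc, Finset.sum_mul, Finset.sum_mul, ← Finset.sum_sub_distrib, ← Finset.sum_add_distrib]
      exact Finset.sum_congr rfl fun _ _ => by ring
    rw [this]; push_cast; ring
  simp_rw [h1]
  rw [integral_prod_mul (L := ℂ)
    (f := fun w : Fin d → ℝ => Complex.exp (Complex.I * ((∑ j, t' j * w j : ℝ) : ℂ)))
    (g := fun z : ℝ => Complex.exp ((c : ℂ) * (z : ℂ) * Complex.I)), cf_gaussN hP,
    ← charFun_apply_real, charFun_gaussianReal, ← Complex.exp_add]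
  congr 1
  have hsym : ∀ k, P k j = P j k := fun k => by simpa using (hP.1.apply k j).symm
  have hcP : ∑ k, t k * P j k = c * P j j := by
    rw [hc, Finset.sum_mul]; exact Finset.sum_congr rfl fun _ _ => by field_simp
  have h2 : ∑ i, ∑ k, t' i * P i k * t' k = ∑ i, ∑ k, t i * P i k * t k - c ^ 2 * P j j := by
    have e : ∀ i k, t' i * P i k * t' k = t i * P i k * t k
        - t i * P i k * Pi.single (M := fun _ => ℝ) j c k
        - Pi.single (M := fun _ => ℝ) j c i * P i k * t k
        + Pi.single (M := fun _ => ℝ) j c i * P i k * Pi.single (M := fun _ => ℝ) j c k :=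
      fun i k => by simp only [ht']; ring
    simp_rw [e, Finset.sum_add_distrib, Finset.sum_sub_distrib]
    simp only [Pi.single_apply, mul_ite, mul_zero, ite_mul, zero_mul, Finset.sum_ite_eq',
      Finset.mem_univ, if_true, Finset.sum_ite_irrel, Finset.sum_const_zero, hsym]
    have e2 : ∑ x, t x * P j x * c = c ^ 2 * P j j := by
      rw [← Finset.sum_mul, hcP]; ring
    have e3 : ∑ x, c * P j x * t x = c ^ 2 * P j j := by
      rw [← e2]; exact Finset.sum_congr rfl fun _ _ => by ring
    rw [e2, e3]; ring
  rw [h2, show (((P j j).toNNReal : ℂ)) = (((P j j).toNNReal : ℝ) : ℂ) from rfl,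
    Real.coe_toNNReal _ hj.le]
  push_cast; ring

/-- The Cauchy–Schwarz inequality for a positive semidefinite matrix. -/
lemma entry_le {P : Matrix (Fin d) (Fin d) ℝ} (hP : P.PosSemidef) (j k : Fin d)
    (hj : 0 < P j j) : P j k ≤ √(P j j) * √(P k k) := by
  have hsym : P k j = P j k := by simpa using (hP.1.apply k j).symm
  rw [← Real.sqrt_mul hj.le]
  apply Real.le_sqrt_of_sq_le
  have h := hP.dotProduct_mulVec_nonneg (Pi.single j (-P j k) + Pi.single k (P j j))
  simp [Matrix.mulVec_add, add_dotProduct, dotProduct_add] at h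
  rw [hsym] at h
  nlinarith

/-- The event that `j` is the smallest maximiser of the standardised gaps `(w k - r) / s k`. -/
def argmaxSet (s : Fin d → ℝ) (r : ℝ) (j : Fin d) : Set (Fin d → ℝ) :=
  {w | (∀ k, (w k - r) / s k ≤ (w j - r) / s j) ∧ ∀ k < j, (w k - r) / s k < (w j - r) / s j}

lemma measurableSet_argmaxSet (s : Fin d → ℝ) (r : ℝ) (j : Fin d) :
    MeasurableSet (argmaxSet s r j) := by
  have : argmaxSet s r j = (⋂ k, {w | (w k - r) / s k ≤ (w j - r) / s j}) ∩
      ⋂ k, ⋂ (_ : k < j), {w | (w k - r) / s k < (w j - r) / s j} := by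
    ext w; simp [argmaxSet]
  rw [this]
  have hm : ∀ k, Measurable (fun w : Fin d → ℝ => (w k - r) / s k) := fun k => by fun_prop
  exact (MeasurableSet.iInter fun k => measurableSet_le (hm k) (hm j)).inter
    (MeasurableSet.iInter fun k => MeasurableSet.iInter fun _ => measurableSet_lt (hm k) (hm j))

lemma disjoint_argmaxSet (s : Fin d → ℝ) (r : ℝ) :
    Pairwise (Function.onFun Disjoint (argmaxSet s r)) := by
  intro i j hij
  rw [Function.onFun, Set.disjoint_left]
  rintro w ⟨h1, h2⟩ ⟨h3, h4⟩
  rcases lt_or_gt_of_ne hij with h | h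
  · exact absurd (h1 j) (not_le.2 (h4 i h))
  · exact absurd (h3 i) (not_le.2 (h2 j h))

lemma exists_argmaxSet [NeZero d] (s : Fin d → ℝ) (r : ℝ) (w : Fin d → ℝ) :
    ∃ j, w ∈ argmaxSet s r j := by
  set N : Fin d → ℝ := fun k => (w k - r) / s k with hN
  obtain ⟨m, -, hm⟩ := Finset.exists_max_image (Finset.univ : Finset (Fin d)) N ⟨0, by simp⟩
  have hne : (Finset.univ.filter fun k => N k = N m).Nonempty := ⟨m, by simp⟩
  set j := (Finset.univ.filter fun k => N k = N m).min' hne with hj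
  have hjm : N j = N m := (Finset.mem_filter.1 (Finset.min'_mem _ hne)).2
  refine ⟨j, fun k => ?_, fun k hk => ?_⟩
  · exact (hm k (Finset.mem_univ _)).trans_eq hjm.symm
  · refine lt_of_le_of_ne ((hm k (Finset.mem_univ _)).trans_eq hjm.symm) fun h => ?_
    have : j ≤ k := Finset.min'_le (Finset.univ.filter fun k => N k = N m) k
      (Finset.mem_filter.2 ⟨Finset.mem_univ k, h.trans hjm⟩)
    exact absurd hk (not_lt.2 this)

/-- The contribution of the `j`-th coordinate to the anticoncentration bound. Conditionally on the
regression residual, the event that `j` attains the maximal standardised gap is an up-set in the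
`j`-th coordinate, so that the one-dimensional bound applies. The mass of that event is kept on the
right: it sums to at most `1` over `j`. -/
lemma gaussN_argmax_le {P : Matrix (Fin d) (Fin d) ℝ} (hP : P.PosSemidef) {v : ℝ} (hv : 0 < v)
    (hvP : ∀ j, v ^ 2 ≤ P j j) {κ e : ℝ} (hκ : 0 ≤ κ) (he : 0 ≤ e) (r : ℝ) (j : Fin d) :
    (gaussN P).real (argmaxSet (fun k => √(P k k)) r j ∩ {w | r < w j ∧ w j ≤ r + e}) ≤
      e / v * (Real.exp (-κ ^ 2 / 2) + Real.exp (3 / 2) * (1 + κ) *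
        (gaussN P).real (argmaxSet (fun k => √(P k k)) r j)) := by
  have hpos : ∀ k, 0 < P k k := fun k => (pow_pos hv 2).trans_le (hvP k)
  set s : Fin d → ℝ := fun k => √(P k k) with hs
  have hs0 : ∀ k, 0 < s k := fun k => Real.sqrt_pos.2 (hpos k)
  have hss : ∀ k, s k ^ 2 = P k k := fun k => Real.sq_sqrt (hpos k).le
  set Φ : (Fin d → ℝ) × ℝ → Fin d → ℝ :=
    fun q k => q.1 k - P j k / P j j * q.1 j + P j k / P j j * q.2 with hΦ
  have hΦm : Measurable Φ := by fun_prop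
  set γ := gaussianReal 0 (P j j).toNNReal with hγ
  set A := argmaxSet s r j with hA
  have hAm : MeasurableSet A := measurableSet_argmaxSet _ _ _
  have hΦj : ∀ q, Φ q j = q.2 := fun q => by
    simp only [hΦ]; rw [div_self (hpos j).ne']; ring
  -- the law of the pair, evaluated by integrating over the second coordinate first
  have hfub : ∀ B : Set (Fin d → ℝ), MeasurableSet B →
      Integrable (fun u => γ.real ((fun z => Φ (u, z)) ⁻¹' B)) (gaussN P) ∧
      (gaussN P).real B = ∫ u, γ.real ((fun z => Φ (u, z)) ⁻¹' B) ∂(gaussN P) := by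
    intro B hB
    constructor
    · exact Measure.integrable_measure_prodMk_left (μ := gaussN P) (ν := γ) (hΦm hB)
        (measure_ne_top _ _)
    · have e1 : (gaussN P).real B = ((gaussN P).prod γ).real (Φ ⁻¹' B) := by
        rw [← map_measureReal_apply hΦm hB, gaussN_regress hP j (hpos j)]
      rw [e1, measureReal_def, Measure.prod_apply (hΦm hB),
        ← integral_toReal (measurable_measure_prodMk_left (hΦm hB)).aemeasurable
          (ae_of_all _ fun _ => measure_lt_top _ _)]
      rfl
  -- each gap grows in `z` no faster than the `j`-th one, so the sections are up-sets
  have hup : ∀ u, IsUpperSet ((fun z => Φ (u, z)) ⁻¹' A) := by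
    intro u a b hab ha
    have hinc : ∀ k, (Φ (u, b) k - r) / s k - (Φ (u, a) k - r) / s k
        ≤ (Φ (u, b) j - r) / s j - (Φ (u, a) j - r) / s j := by
      intro k
      have h1 : P j k / P j j / s k ≤ 1 / s j := by
        rw [div_div, div_le_div_iff₀ (mul_pos (hpos j) (hs0 k)) (hs0 j), ← hss j]
        have := entry_le hP j k (hpos j)
        have h2 : P j k ≤ s j * s k := this
        nlinarith [hs0 j, hs0 k]
      have e1 : (Φ (u, b) k - r) / s k - (Φ (u, a) k - r) / s k = P j k / P j j / s k * (b - a) := by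
        simp only [hΦ]; field_simp; ring
      have e2 : (Φ (u, b) j - r) / s j - (Φ (u, a) j - r) / s j = 1 / s j * (b - a) := by
        rw [hΦj, hΦj]; ring
      rw [e1, e2]
      exact mul_le_mul_of_nonneg_right h1 (sub_nonneg.2 hab)
    obtain ⟨h1, h2⟩ := ha
    refine ⟨fun k => ?_, fun k hk => ?_⟩
    · linarith [hinc k, h1 k]
    · linarith [hinc k, h2 k hk]
  have hBm : MeasurableSet {w : Fin d → ℝ | r < w j ∧ w j ≤ r + e} :=
    (measurableSet_lt measurable_const (measurable_pi_apply j)).inter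
      (measurableSet_le (measurable_pi_apply j) measurable_const)
  obtain ⟨i1, e1⟩ := hfub A hAm
  obtain ⟨i2, e2⟩ := hfub _ (hAm.inter hBm)
  rw [e2, e1]
  have hpt : ∀ u, γ.real ((fun z => Φ (u, z)) ⁻¹' (A ∩ {w | r < w j ∧ w j ≤ r + e})) ≤
      e / v * (Real.exp (-κ ^ 2 / 2) + Real.exp (3 / 2) * (1 + κ) *
        γ.real ((fun z => Φ (u, z)) ⁻¹' A)) := by
    intro u
    have hset : (fun z => Φ (u, z)) ⁻¹' (A ∩ {w | r < w j ∧ w j ≤ r + e})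
        = ((fun z => Φ (u, z)) ⁻¹' A) ∩ Set.Ioc r (r + e) := by
      ext z
      simp [hΦj]
    rw [hset, hγ, ← hss j]
    exact upper_inter_Ioc_scaled hκ he hv
      ((Real.le_sqrt hv.le (hpos j).le).2 (hvP j)) (hup u) ((hΦm.comp measurable_prodMk_left) hAm)
  refine (integral_mono i2 (((integrable_const _).add (i1.const_mul _)).const_mul _) hpt).trans_eq ?_
  rw [integral_const_mul, integral_add' (integrable_const _) (i1.const_mul _), integral_const_mul]
  simp

/-- **Anti-concentration of Gaussian maxima** (Nazarov's inequality), without any condition on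
the correlations. -/
lemma anticoncentration : ∃ C : ℝ, 0 < C ∧ ∀ (d : ℕ), 1 < d →
    ∀ P : Matrix (Fin d) (Fin d) ℝ, P.PosSemidef → ∀ v : ℝ, 0 < v → (∀ j, v ^ 2 ≤ P j j) →
    ∀ r e : ℝ, 0 ≤ e →
    (gaussN P).real {w | (∃ k, r < w k) ∧ ∀ k, w k ≤ r + e} ≤ C * (e / v * √(Real.log d)) := by
  refine ⟨4 + 4 * Real.exp (3 / 2), by positivity, fun d hd P hP v hv hvP r e he => ?_⟩
  have : NeZero d := ⟨by omega⟩
  have hd' : (2 : ℝ) ≤ d := by exact_mod_cast hd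
  have hlog : (1 / 2 : ℝ) ≤ Real.log d := by
    have := Real.log_two_gt_d9
    have := Real.log_le_log (by norm_num) hd'
    linarith
  -- the threshold at which the `d` error terms `exp (-κ ^ 2 / 2)` add up to `1`
  set κ := √(2 * Real.log d) with hκ
  have hκ2 : κ ^ 2 = 2 * Real.log d := Real.sq_sqrt (by linarith)
  have hpos : ∀ k, 0 < P k k := fun k => (pow_pos hv 2).trans_le (hvP k)
  set s : Fin d → ℝ := fun k => √(P k k) with hs
  have hs0 : ∀ k, 0 < s k := fun k => Real.sqrt_pos.2 (hpos k)
  have hcov : {w : Fin d → ℝ | (∃ k, r < w k) ∧ ∀ k, w k ≤ r + e} ⊆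
      ⋃ j, (argmaxSet s r j ∩ {w | r < w j ∧ w j ≤ r + e}) := by
    rintro w ⟨⟨k, hk⟩, h2⟩
    obtain ⟨j, hj⟩ := exists_argmaxSet s r w
    refine Set.mem_iUnion.2 ⟨j, hj, ?_, h2 j⟩
    have h3 : 0 < (w k - r) / s k := div_pos (by linarith) (hs0 k)
    have h4 := h3.trans_le (hj.1 k)
    rw [div_pos_iff_of_pos_right (hs0 j)] at h4
    linarith
  have hsum : ∑ j, (gaussN P).real (argmaxSet s r j) ≤ 1 := by
    rw [← measureReal_iUnion_fintype (disjoint_argmaxSet s r)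
      (fun j => measurableSet_argmaxSet _ _ _)]
    exact measureReal_le_one
  calc (gaussN P).real {w | (∃ k, r < w k) ∧ ∀ k, w k ≤ r + e}
      ≤ (gaussN P).real (⋃ j, (argmaxSet s r j ∩ {w | r < w j ∧ w j ≤ r + e})) :=
        measureReal_mono hcov
    _ ≤ ∑ j, (gaussN P).real (argmaxSet s r j ∩ {w | r < w j ∧ w j ≤ r + e}) :=
        measureReal_iUnion_fintype_le _
    _ ≤ ∑ j, e / v * (Real.exp (-κ ^ 2 / 2) + Real.exp (3 / 2) * (1 + κ) *
        (gaussN P).real (argmaxSet s r j)) :=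
        Finset.sum_le_sum fun j _ => gaussN_argmax_le hP hv hvP (Real.sqrt_nonneg _) he r j
    _ = e / v * (d * Real.exp (-κ ^ 2 / 2) + Real.exp (3 / 2) * (1 + κ) *
        ∑ j, (gaussN P).real (argmaxSet s r j)) := by
        rw [← Finset.mul_sum, Finset.sum_add_distrib, ← Finset.mul_sum]; simp
    _ ≤ e / v * (1 + Real.exp (3 / 2) * (1 + κ) * 1) := by
        have : (d : ℝ) * Real.exp (-κ ^ 2 / 2) = 1 := by
          rw [hκ2, show -(2 * Real.log d) / 2 = -Real.log d by ring, Real.exp_neg,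
            Real.exp_log (by linarith)]
          field_simp
        rw [this]
        gcongr
    _ ≤ (4 + 4 * Real.exp (3 / 2)) * (e / v * √(Real.log d)) := by
        set x := √(Real.log d) with hx
        have hx1 : 1 / 2 ≤ x := by
          apply Real.le_sqrt_of_sq_le; norm_num; linarith
        have hκx : κ ≤ 2 * x := by
          rw [hκ, hx, Real.sqrt_le_left (by positivity), mul_pow, Real.sq_sqrt (by linarith)]
          linarith
        have hev : 0 ≤ e / v := by positivity
        have hE := Real.exp_pos (3 / 2)
        have : 1 + Real.exp (3 / 2) * (1 + κ) * 1 ≤ (4 + 4 * Real.exp (3 / 2)) * x := by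
          nlinarith
        nlinarith

end Anticoncentration

/-! ### Third moment of the Gaussian maximum norm -/

section ThirdMoment
variable {d : ℕ}

lemma integrable_exp_sq_gaussian : Integrable (fun x : ℝ => Real.exp (x ^ 2 / 4)) (gaussianReal 0 1) := by
  rw [gaussianReal_of_var_ne_zero 0 one_ne_zero]
  refine (integrable_withDensity_iff_integrable_smul' (measurable_gaussianPDF 0 1)
    (ae_of_all _ fun _ => gaussianPDF_lt_top)).2 ?_
  have h := (integrable_exp_neg_mul_sq (b := 1 / 4) (by norm_num)).const_mul (√(2 * π))⁻¹
  refine h.congr (ae_of_all _ fun x => ?_)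
  simp only [smul_eq_mul, toReal_gaussianPDF, gaussianPDFReal]
  rw [mul_assoc, ← Real.exp_add]
  congr 2
  · simp
  · simp; ring

/-- Exponential domination of a cube: above the level `√(6sL)`, which is the size of the
largest of `e^L` Gaussians of variance `s`, the cube is controlled by an exponential square. -/
lemma cube_le_exp {s L : ℝ} (hs : 0 < s) (hL : 1 ≤ L) (x : ℝ) :
    |x| ^ 3 ≤ √(6 * s * L) ^ 3 * (1 + Real.exp (x ^ 2 / (4 * s)) * Real.exp (-(3 / 2) * L)) := by
  have hL0 : 0 < L := by linarith
  set M := √(6 * s * L) with hM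
  have hM0 : 0 < M := Real.sqrt_pos.2 (by positivity)
  have hMM : M ^ 2 = 6 * s * L := Real.sq_sqrt (by positivity)
  rcases le_total |x| M with h | h
  · have h1 : |x| ^ 3 ≤ M ^ 3 := pow_le_pow_left₀ (abs_nonneg _) h 3
    nlinarith [pow_pos hM0 3, mul_pos (Real.exp_pos (x ^ 2 / (4 * s))) (Real.exp_pos (-(3 / 2) * L))]
  · set u := x ^ 2 / (6 * s * L) with hu
    have hu1 : 1 ≤ u := by
      rw [hu, one_le_div (by positivity), ← hMM, ← sq_abs x]
      exact pow_le_pow_left₀ hM0.le h 2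
    have h1 : u ≤ Real.exp (L * (u - 1)) := by
      have := Real.add_one_le_exp (u - 1)
      refine (by linarith : u ≤ Real.exp (u - 1)).trans (Real.exp_le_exp.2 ?_)
      nlinarith
    have hx2 : |x| ^ 2 = M ^ 2 * u := by
      rw [hMM, hu, sq_abs]; field_simp
    have h2 : |x| ≤ M * Real.exp (L * (u - 1) / 2) := by
      refine le_of_sq_le_sq ?_ (by positivity)
      rw [hx2, mul_pow, ← Real.exp_nat_mul]
      refine mul_le_mul_of_nonneg_left (h1.trans_eq ?_) (by positivity)
      congr 1; push_cast; ring
    have h3 : |x| ^ 3 ≤ (M * Real.exp (L * (u - 1) / 2)) ^ 3 := pow_le_pow_left₀ (abs_nonneg _) h2 3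
    refine h3.trans ?_
    rw [mul_pow, ← Real.exp_nat_mul, ← Real.exp_add]
    refine mul_le_mul_of_nonneg_left ?_ (by positivity)
    have : ((3 : ℕ) : ℝ) * (L * (u - 1) / 2) = x ^ 2 / (4 * s) + -(3 / 2) * L := by
      rw [hu]; push_cast; field_simp; ring
    rw [this]; linarith

/-- The exponential square moment of a coordinate of variance at most `s`, at a rate for which it is
bounded by an absolute constant. -/
lemma gaussN_exp_sq {P : Matrix (Fin d) (Fin d) ℝ} (hP : P.PosSemidef) {s : ℝ} (hs : 0 < s)
    (j : Fin d) (hj : P j j ≤ s) :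
    Integrable (fun w => Real.exp (w j ^ 2 / (4 * s))) (gaussN P) ∧
    ∫ w, Real.exp (w j ^ 2 / (4 * s)) ∂(gaussN P) ≤
      ∫ x, Real.exp (x ^ 2 / 4) ∂(gaussianReal 0 1) := by
  have hnn : 0 ≤ P j j := hP.diag_nonneg
  have hm : AEMeasurable (fun w : Fin d → ℝ => w j) (gaussN P) :=
    (measurable_pi_apply j).aemeasurable
  have hmap : (gaussN P).map (fun w => w j) =
      (gaussianReal 0 1).map (fun x => √(P j j) * x) := by
    rw [gaussN_map_eval hP, gaussianReal_map_const_mul, mul_zero, mul_one]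
    congr 1
    ext
    simp [Real.sq_sqrt hnn, hnn]
  have hle : ∀ x : ℝ, Real.exp ((√(P j j) * x) ^ 2 / (4 * s)) ≤ Real.exp (x ^ 2 / 4) := by
    intro x
    refine Real.exp_le_exp.2 ?_
    rw [mul_pow, Real.sq_sqrt hnn, div_le_div_iff₀ (by positivity) (by norm_num)]
    nlinarith [sq_nonneg x]
  have hi : Integrable (fun x : ℝ => Real.exp ((√(P j j) * x) ^ 2 / (4 * s))) (gaussianReal 0 1) :=
    integrable_exp_sq_gaussian.mono' (by fun_prop) (ae_of_all _ fun x => by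
      rw [Real.norm_of_nonneg (Real.exp_pos _).le]; exact hle x)
  constructor
  · have h : Integrable (fun x : ℝ => Real.exp (x ^ 2 / (4 * s))) ((gaussN P).map (fun w => w j)) := by
      rw [hmap, integrable_map_measure (by fun_prop) (by fun_prop)]
      exact hi
    exact h.comp_aemeasurable hm
  · rw [← integral_map (f := fun x : ℝ => Real.exp (x ^ 2 / (4 * s))) hm (by fun_prop), hmap,
      integral_map (by fun_prop) (by fun_prop)]
    exact integral_mono hi integrable_exp_sq_gaussian hle

/-- The third-moment bound for a positive variance bound `s`: summing `cube_le_exp` over the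
coordinates, the factor `exp (-3 L / 2) ≤ 1 / d` absorbs the number of terms. -/
lemma gaussN_third_pos {P : Matrix (Fin d) (Fin d) ℝ} (hd : 1 < d) (hP : P.PosSemidef) {s L : ℝ}
    (hs : 0 < s) (hL : 1 ≤ L) (hdL : Real.log d ≤ L) (hj : ∀ j, P j j ≤ s) :
    Integrable (fun w => ‖w‖ ^ 3) (gaussN P) ∧
    ∫ w, ‖w‖ ^ 3 ∂(gaussN P) ≤
      √(6 * s * L) ^ 3 * (1 + ∫ x, Real.exp (x ^ 2 / 4) ∂(gaussianReal 0 1)) := by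
  have : Nonempty (Fin d) := ⟨⟨0, by omega⟩⟩
  set A := ∫ x, Real.exp (x ^ 2 / 4) ∂(gaussianReal 0 1)
  have hi := fun j => (gaussN_exp_sq hP hs j (hj j)).1
  have hpt : ∀ w : Fin d → ℝ, ‖w‖ ^ 3 ≤ √(6 * s * L) ^ 3 *
      (1 + (∑ j, Real.exp (w j ^ 2 / (4 * s))) * Real.exp (-(3 / 2) * L)) := by
    intro w
    obtain ⟨j, hj⟩ : ∃ j, ‖w‖ = |w j| := by
      obtain ⟨j, -, hj⟩ := Finset.exists_max_image (Finset.univ : Finset (Fin d)) (fun j => |w j|)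
        Finset.univ_nonempty
      refine ⟨j, le_antisymm ((pi_norm_le_iff_of_nonneg (abs_nonneg _)).2 fun k => hj k (Finset.mem_univ _))
        (norm_le_pi_norm w j)⟩
    rw [hj]
    refine (cube_le_exp hs hL (w j)).trans ?_
    gcongr
    exact Finset.single_le_sum (f := fun j => Real.exp (w j ^ 2 / (4 * s)))
      (fun _ _ => (Real.exp_pos _).le) (Finset.mem_univ j)
  have hb : Integrable (fun w : Fin d → ℝ => √(6 * s * L) ^ 3 *
      (1 + (∑ j, Real.exp (w j ^ 2 / (4 * s))) * Real.exp (-(3 / 2) * L))) (gaussN P) :=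
    ((integrable_const _).add ((integrable_finsetSum _ fun j _ => hi j).mul_const _)).const_mul _
  have hint : Integrable (fun w => ‖w‖ ^ 3) (gaussN P) :=
    hb.mono' (by fun_prop) (ae_of_all _ fun w => by
      rw [Real.norm_of_nonneg (by positivity)]; exact hpt w)
  refine ⟨hint, (integral_mono hint hb hpt).trans ?_⟩
  rw [integral_const_mul, integral_add (integrable_const _)
    ((integrable_finsetSum _ fun j _ => hi j).mul_const _), integral_mul_const,
    integral_finsetSum _ fun j _ => hi j]
  simp only [integral_const, probReal_univ, one_smul]
  refine mul_le_mul_of_nonneg_left ?_ (by positivity)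
  have h1 : ∑ j, ∫ w, Real.exp (w j ^ 2 / (4 * s)) ∂(gaussN P) ≤ d * A := by
    refine (Finset.sum_le_sum fun j _ => (gaussN_exp_sq hP hs j (hj j)).2).trans_eq ?_
    simp [A]
  have h2 : Real.exp (-(3 / 2) * L) ≤ 1 / d := by
    have hd0 : (0 : ℝ) < d := by positivity
    rw [← Real.exp_log hd0, one_div, ← Real.exp_neg]
    exact Real.exp_le_exp.2 (by linarith)
  have hA : 0 ≤ A := integral_nonneg fun _ => (Real.exp_pos _).le
  have hd0 : (0 : ℝ) < d := by positivity
  calc _ ≤ 1 + (d * A) * (1 / d) := by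
        gcongr
    _ = 1 + A := by field_simp

/-- **Third absolute moment of a Gaussian maximum norm.** -/
lemma gaussN_third : ∃ C : ℝ, 0 < C ∧ ∀ (d : ℕ), 1 < d → ∀ P : Matrix (Fin d) (Fin d) ℝ,
    P.PosSemidef → ∀ s L : ℝ, 0 ≤ s → 1 ≤ L → Real.log d ≤ L → (∀ j, P j j ≤ s) →
    Integrable (fun w => ‖w‖ ^ 3) (gaussN P) ∧
      ∫ w, ‖w‖ ^ 3 ∂(gaussN P) ≤ C * (s * L) ^ ((3 : ℝ) / 2) := by
  set A := ∫ x, Real.exp (x ^ 2 / 4) ∂(gaussianReal 0 1) with hA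
  have hA0 : 0 ≤ A := integral_nonneg fun _ => (Real.exp_pos _).le
  refine ⟨√6 ^ 3 * (1 + A), by positivity, fun d hd P hP s L hs hL hdL hj => ?_⟩
  -- the variance bound `s` may vanish, hence it is approached from above by `s + e`
  have key : ∀ e : ℝ, 0 < e → ∫ w, ‖w‖ ^ 3 ∂(gaussN P) ≤ √(6 * (s + e) * L) ^ 3 * (1 + A) :=
    fun e he => (gaussN_third_pos hd hP (by linarith) hL hdL fun j => (hj j).trans (by linarith)).2
  refine ⟨(gaussN_third_pos (s := s + 1) hd hP (by linarith) hL hdL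
    fun j => (hj j).trans (by linarith)).1, ?_⟩
  have hlim : Filter.Tendsto (fun e : ℝ => √(6 * (s + e) * L) ^ 3 * (1 + A))
      (nhdsWithin 0 (Set.Ioi 0)) (nhds (√(6 * (s + 0) * L) ^ 3 * (1 + A))) := by
    refine Filter.Tendsto.mono_left (Continuous.tendsto ?_ 0) nhdsWithin_le_nhds
    fun_prop
  refine (ge_of_tendsto hlim (eventually_nhdsWithin_of_forall fun e he => key e he)).trans_eq ?_
  have h1 : (s * L) ^ ((3 : ℝ) / 2) = √(s * L) ^ 3 := by
    rw [Real.sqrt_eq_rpow, ← Real.rpow_natCast, ← Real.rpow_mul (by positivity)]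
    norm_num
  rw [h1, add_zero, mul_assoc, Real.sqrt_mul (by norm_num), mul_pow]
  ring

end ThirdMoment

/-! ### Smooth test functions for the maximum -/

section TestFunction

/-- A smooth cutoff: `1` on `(-∞, 1]`, `0` on `[2, ∞)`, with three bounded derivatives. -/
lemma exists_cutoff : ∃ (g g1 g2 g3 : ℝ → ℝ) (G : ℝ), 0 < G ∧
    (∀ s, HasDerivAt g (g1 s) s) ∧ (∀ s, HasDerivAt g1 (g2 s) s) ∧
    (∀ s, HasDerivAt g2 (g3 s) s) ∧
    (∀ s, |g1 s| ≤ G) ∧ (∀ s, |g2 s| ≤ G) ∧ (∀ s, |g3 s| ≤ G) ∧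
    (∀ s, 0 ≤ g s ∧ g s ≤ 1) ∧ (∀ s, s ≤ 1 → g s = 1) ∧ (∀ s, 2 ≤ s → g s = 0) := by
  set g : ℝ → ℝ := fun s => Real.smoothTransition (2 - s) with hg
  have hc : ContDiff ℝ (3 : ℕ) g := Real.smoothTransition.contDiff.comp (contDiff_const.sub contDiff_id)
  have h1 : ContDiff ℝ (2 : ℕ) (deriv g) := hc.deriv'
  have h2 : ContDiff ℝ (1 : ℕ) (deriv (deriv g)) := h1.deriv'
  have h3 : ContDiff ℝ (0 : ℕ) (deriv (deriv (deriv g))) := h2.deriv'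
  have hone : ∀ s, s ≤ 1 → g s = 1 := fun s hs => Real.smoothTransition.one_of_one_le (by linarith)
  have hzero : ∀ s, 2 ≤ s → g s = 0 := fun s hs => Real.smoothTransition.zero_of_nonpos (by linarith)
  have s1 : HasCompactSupport (deriv g) := by
    refine HasCompactSupport.intro (isCompact_Icc (a := (1 : ℝ)) (b := 2)) fun s hs => ?_
    rcases lt_or_ge s 1 with h | h
    · have : g =ᶠ[nhds s] fun _ => 1 := by
        filter_upwards [Iio_mem_nhds h] with y hy using hone y (le_of_lt hy)
      rw [this.deriv_eq]; simp
    · have h' : 2 < s := by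
        by_contra h2; exact hs ⟨h, not_lt.1 h2⟩
      have : g =ᶠ[nhds s] fun _ => 0 := by
        filter_upwards [Ioi_mem_nhds h'] with y hy using hzero y (le_of_lt hy)
      rw [this.deriv_eq]; simp
  obtain ⟨B1, hB1⟩ := s1.exists_bound_of_continuous h1.continuous
  obtain ⟨B2, hB2⟩ := s1.deriv.exists_bound_of_continuous h2.continuous
  obtain ⟨B3, hB3⟩ := s1.deriv.deriv.exists_bound_of_continuous h3.continuous
  refine ⟨g, deriv g, deriv (deriv g), deriv (deriv (deriv g)), 1 + |B1| + |B2| + |B3|, by positivity,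
    fun s => (hc.differentiable (by norm_num) s).hasDerivAt,
    fun s => (h1.differentiable (by norm_num) s).hasDerivAt,
    fun s => (h2.differentiable (by norm_num) s).hasDerivAt,
    fun s => ?_, fun s => ?_, fun s => ?_,
    fun s => ⟨Real.smoothTransition.nonneg _, Real.smoothTransition.le_one _⟩, hone, hzero⟩
  · have := hB1 s; rw [Real.norm_eq_abs] at this
    linarith [le_abs_self B1, abs_nonneg B2, abs_nonneg B3]
  · have := hB2 s; rw [Real.norm_eq_abs] at this
    linarith [le_abs_self B2, abs_nonneg B1, abs_nonneg B3]
  · have := hB3 s; rw [Real.norm_eq_abs] at this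
    linarith [le_abs_self B3, abs_nonneg B2, abs_nonneg B1]

/-- Second-order Taylor estimate on `[0,1]`. -/
lemma taylor_two {q q1 q2 q3 : ℝ → ℝ} {B : ℝ} (h0 : ∀ t, HasDerivAt q (q1 t) t)
    (h1 : ∀ t, HasDerivAt q1 (q2 t) t) (h2 : ∀ t, HasDerivAt q2 (q3 t) t) (hB : ∀ t, |q3 t| ≤ B) :
    |q 1 - q 0 - q1 0 - 1 / 2 * q2 0| ≤ B := by
  have hB0 : 0 ≤ B := (abs_nonneg _).trans (hB 0)
  have mv : ∀ (h h' : ℝ → ℝ), (∀ t, HasDerivAt h (h' t) t) → (∀ t ∈ Set.Icc (0 : ℝ) 1, |h' t| ≤ B) →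
      h 0 = 0 → ∀ t ∈ Set.Icc (0 : ℝ) 1, |h t| ≤ B := by
    intro h h' hd hb hz t ht
    have := (convex_Icc (0 : ℝ) 1).norm_image_sub_le_of_norm_hasDerivWithin_le
      (fun x _ => (hd x).hasDerivWithinAt) (fun x hx => by rw [Real.norm_eq_abs]; exact hb x hx)
      (Set.left_mem_Icc.2 zero_le_one) ht
    rw [hz, sub_zero, sub_zero, Real.norm_eq_abs, Real.norm_eq_abs, abs_of_nonneg ht.1] at this
    nlinarith [ht.2]
  have a2 := mv (fun t => q2 t - q2 0) q3 (fun t => (h2 t).sub_const _) (fun t _ => hB t) (by simp)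
  have a1 := mv (fun t => q1 t - q1 0 - t * q2 0) (fun t => q2 t - q2 0)
    (fun t => (((h1 t).sub_const (q1 0)).sub ((hasDerivAt_id t).mul_const (q2 0))).congr_deriv
      (by simp))
    a2 (by simp)
  have a0 := mv (fun t => q t - q 0 - t * q1 0 - 1 / 2 * t ^ 2 * q2 0)
    (fun t => q1 t - q1 0 - t * q2 0)
    (fun t => by
      have e := ((((h0 t).sub_const (q 0)).sub ((hasDerivAt_id t).mul_const (q1 0))).sub
        ((((hasDerivAt_pow 2 t).const_mul (1 / 2)).mul_const (q2 0))))
      refine e.congr_deriv ?_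
      simp)
    a1 (by simp)
  have := a0 1 (Set.right_mem_Icc.2 zero_le_one)
  simpa using this

variable {d : ℕ}

/-- The soft maximum `b⁻¹ log ∑ exp (b x_j)`. -/
noncomputable def softMax (b : ℝ) (x : Fin d → ℝ) : ℝ := Real.log (∑ k, Real.exp (b * x k)) / b

/-- The gradient of the soft maximum, a probability vector. -/
noncomputable def softProb (b : ℝ) (x : Fin d → ℝ) (j : Fin d) : ℝ :=
  Real.exp (b * x j) / ∑ k, Real.exp (b * x k)

lemma sum_exp_pos [NeZero d] (b : ℝ) (x : Fin d → ℝ) : 0 < ∑ k, Real.exp (b * x k) :=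
  Finset.sum_pos (fun _ _ => Real.exp_pos _) Finset.univ_nonempty

lemma softProb_nonneg (b : ℝ) (x : Fin d → ℝ) (j : Fin d) : 0 ≤ softProb b x j := by
  unfold softProb; positivity

lemma sum_softProb [NeZero d] (b : ℝ) (x : Fin d → ℝ) : ∑ j, softProb b x j = 1 := by
  unfold softProb
  rw [← Finset.sum_div, div_self (sum_exp_pos b x).ne']

lemma softProb_le_one [NeZero d] (b : ℝ) (x : Fin d → ℝ) (j : Fin d) : softProb b x j ≤ 1 := by
  rw [← sum_softProb b x]
  exact Finset.single_le_sum (fun k _ => softProb_nonneg b x k) (Finset.mem_univ j)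

lemma continuous_softProb [NeZero d] (b : ℝ) (j : Fin d) :
    Continuous fun x : Fin d → ℝ => softProb b x j := by
  unfold softProb
  exact Continuous.div (by fun_prop) (by fun_prop) fun x => (sum_exp_pos b x).ne'

lemma continuous_softMax [NeZero d] (b : ℝ) : Continuous fun x : Fin d → ℝ => softMax b x := by
  unfold softMax
  exact (Continuous.log (by fun_prop) fun x => (sum_exp_pos b x).ne').div_const _

lemma le_softMax [NeZero d] {b : ℝ} (hb : 0 < b) (x : Fin d → ℝ) (j : Fin d) : x j ≤ softMax b x := by
  unfold softMax
  rw [le_div_iff₀ hb, Real.le_log_iff_exp_le (sum_exp_pos b x), mul_comm]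
  exact Finset.single_le_sum (f := fun k => Real.exp (b * x k)) (fun k _ => (Real.exp_pos _).le)
    (Finset.mem_univ j)

lemma softMax_le [NeZero d] {b r : ℝ} (hb : 0 < b) (x : Fin d → ℝ) (h : ∀ j, x j ≤ r) :
    softMax b x ≤ r + Real.log d / b := by
  have hd0 : (0 : ℝ) < d := by exact_mod_cast Nat.pos_of_ne_zero (NeZero.ne d)
  unfold softMax
  rw [div_le_iff₀ hb, add_mul, div_mul_cancel₀ _ hb.ne', Real.log_le_iff_le_exp (sum_exp_pos b x),
    Real.exp_add, Real.exp_log hd0]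
  calc ∑ k, Real.exp (b * x k) ≤ ∑ _k : Fin d, Real.exp (r * b) :=
        Finset.sum_le_sum fun k _ => Real.exp_le_exp.2 (by nlinarith [h k])
    _ = _ := by simp [mul_comm]

/-- The `n`-th moment of the increments `u` under the soft-max weights. -/
noncomputable def softMom (b : ℝ) (x u : Fin d → ℝ) (n : ℕ) : ℝ := ∑ j, softProb b x j * u j ^ n

lemma abs_softMom_le [NeZero d] (b : ℝ) (x u : Fin d → ℝ) (n : ℕ) : |softMom b x u n| ≤ ‖u‖ ^ n := by
  unfold softMom
  calc _ ≤ ∑ j, |softProb b x j * u j ^ n| := Finset.abs_sum_le_sum_abs _ _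
    _ ≤ ∑ j, softProb b x j * ‖u‖ ^ n := by
        refine Finset.sum_le_sum fun j _ => ?_
        rw [abs_mul, abs_of_nonneg (softProb_nonneg b x j), abs_pow]
        exact mul_le_mul_of_nonneg_left (pow_le_pow_left₀ (abs_nonneg _) (norm_le_pi_norm u j) n)
          (softProb_nonneg b x j)
    _ = _ := by rw [← Finset.sum_mul, sum_softProb, one_mul]

lemma hasDerivAt_sumExp (b : ℝ) (x u : Fin d → ℝ) (t : ℝ) :
    HasDerivAt (fun t => ∑ k, Real.exp (b * (x + t • u) k))
      (∑ k, Real.exp (b * (x + t • u) k) * (b * u k)) t := by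
  refine HasDerivAt.fun_sum fun k _ => ?_
  refine HasDerivAt.exp ?_
  have := (((hasDerivAt_id t).mul_const (u k)).const_add (x k)).const_mul b
  simpa using this

lemma hasDerivAt_softMax [NeZero d] {b : ℝ} (hb : b ≠ 0) (x u : Fin d → ℝ) (t : ℝ) :
    HasDerivAt (fun t => softMax b (x + t • u)) (softMom b (x + t • u) u 1) t := by
  unfold softMax softMom softProb
  have := ((hasDerivAt_sumExp b x u t).log (sum_exp_pos b _).ne').div_const b
  refine this.congr_deriv ?_
  rw [Finset.sum_div, Finset.sum_div]
  refine Finset.sum_congr rfl fun j _ => ?_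
  field_simp

lemma hasDerivAt_softProb [NeZero d] (b : ℝ) (x u : Fin d → ℝ) (j : Fin d) (t : ℝ) :
    HasDerivAt (fun t => softProb b (x + t • u) j)
      (b * (softProb b (x + t • u) j * (u j - softMom b (x + t • u) u 1))) t := by
  have h1 : HasDerivAt (fun t => Real.exp (b * (x + t • u) j))
      (Real.exp (b * (x + t • u) j) * (b * u j)) t := by
    refine HasDerivAt.exp ?_
    have := (((hasDerivAt_id t).mul_const (u j)).const_add (x j)).const_mul b
    simpa using this
  have hne := (sum_exp_pos b (x + t • u)).ne'
  refine (h1.div (hasDerivAt_sumExp b x u t) hne).congr_deriv ?_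
  have e : softMom b (x + t • u) u 1 =
      (∑ k, Real.exp (b * (x + t • u) k) * u k) / ∑ k, Real.exp (b * (x + t • u) k) := by
    unfold softMom softProb
    rw [Finset.sum_div]
    exact Finset.sum_congr rfl fun k _ => by rw [pow_one]; ring
  have e2 : ∑ k, Real.exp (b * (x + t • u) k) * (b * u k) =
      b * ∑ k, Real.exp (b * (x + t • u) k) * u k := by
    rw [Finset.mul_sum]; exact Finset.sum_congr rfl fun k _ => by ring
  rw [e, e2]
  unfold softProb
  field_simp

lemma hasDerivAt_softMom [NeZero d] (b : ℝ) (x u : Fin d → ℝ) (n : ℕ) (t : ℝ) :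
    HasDerivAt (fun t => softMom b (x + t • u) u n)
      (b * (softMom b (x + t • u) u (n + 1) -
        softMom b (x + t • u) u n * softMom b (x + t • u) u 1)) t := by
  refine (HasDerivAt.fun_sum fun j _ => (hasDerivAt_softProb b x u j t).mul_const (u j ^ n)).congr_deriv ?_
  generalize softMom b (x + t • u) u 1 = m
  unfold softMom
  rw [Finset.sum_mul, ← Finset.sum_sub_distrib, Finset.mul_sum]
  exact Finset.sum_congr rfl fun j _ => by ring

/-- **A smooth approximation of the indicator of `{max ≤ r}`**: a cutoff composed with the soft
maximum at inverse temperature `log d / δ`.  The Hessian is bounded entrywise and the Taylor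
remainder in the maximum norm, with only logarithmic dependence on the dimension. -/
lemma exists_test : ∃ K : ℝ, 0 < K ∧ ∀ (d : ℕ), 1 < d → ∀ δ : ℝ, 0 < δ → ∀ r : ℝ,
    ∃ (f : (Fin d → ℝ) → ℝ) (f' : (Fin d → ℝ) → Fin d → ℝ)
      (f'' : (Fin d → ℝ) → Fin d → Fin d → ℝ),
      Continuous f ∧ (∀ j, Continuous fun x => f' x j) ∧ (∀ j k, Continuous fun x => f'' x j k) ∧
      (∀ x, 0 ≤ f x ∧ f x ≤ 1) ∧ (∀ x, (∀ j, x j ≤ r) → f x = 1) ∧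
      (∀ x, (∃ j, r + 2 * δ ≤ x j) → f x = 0) ∧
      (∃ B, ∀ x j, |f' x j| ≤ B) ∧
      (∀ x j k, |f'' x j k| ≤ K * (Real.log d / δ ^ 2)) ∧
      (∀ x u, |f (x + u) - f x - ∑ j, f' x j * u j - 1 / 2 * ∑ j, ∑ k, f'' x j k * (u j * u k)| ≤
        K * (Real.log d ^ 2 / δ ^ 3) * ‖u‖ ^ 3) := by
  obtain ⟨g, g1, g2, g3, G, hG, hg0, hg1, hg2, b1, b2, b3, hg01, hgone, hgzero⟩ := exists_cutoff
  refine ⟨22 * G, by positivity, fun d hd δ hδ r => ?_⟩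
  have : NeZero d := ⟨by omega⟩
  have hd' : (2 : ℝ) ≤ d := by exact_mod_cast hd
  have hlog : (1 / 2 : ℝ) ≤ Real.log d := by
    have := Real.log_two_gt_d9
    have := Real.log_le_log (by norm_num) hd'
    linarith
  set l := Real.log d with hl
  set b := l / δ with hb
  have hb0 : 0 < b := by positivity
  have cg0 : Continuous g := continuous_iff_continuousAt.2 fun s => (hg0 s).continuousAt
  have cg1 : Continuous g1 := continuous_iff_continuousAt.2 fun s => (hg1 s).continuousAt
  have cg2 : Continuous g2 := continuous_iff_continuousAt.2 fun s => (hg2 s).continuousAt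
  have cs : Continuous fun x : Fin d → ℝ => (softMax b x - r) / δ :=
    ((continuous_softMax b).sub continuous_const).div_const _
  refine ⟨fun x => g ((softMax b x - r) / δ),
    fun x j => g1 ((softMax b x - r) / δ) / δ * softProb b x j,
    fun x j k => g2 ((softMax b x - r) / δ) / δ ^ 2 * (softProb b x j * softProb b x k) +
      g1 ((softMax b x - r) / δ) / δ * b *
        ((if j = k then softProb b x j else 0) - softProb b x j * softProb b x k),
    cg0.comp cs, fun j => ((cg1.comp cs).div_const _).mul (continuous_softProb b j), ?_,
    fun x => hg01 _, ?_, ?_, ⟨G / δ, ?_⟩, ?_, ?_⟩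
  · intro j k
    refine (((cg2.comp cs).div_const _).mul ((continuous_softProb b j).mul (continuous_softProb b k))).add
      ((((cg1.comp cs).div_const _).mul continuous_const).mul (Continuous.sub ?_
        ((continuous_softProb b j).mul (continuous_softProb b k))))
    split_ifs
    exacts [continuous_softProb b j, continuous_const]
  · intro x hx
    refine hgone _ ?_
    rw [div_le_one hδ]
    have := softMax_le hb0 x hx
    have e : Real.log d / b = δ := by rw [hb, ← hl]; field_simp
    linarith
  · rintro x ⟨j, hj⟩
    refine hgzero _ ?_
    rw [le_div_iff₀ hδ]
    linarith [le_softMax hb0 x j]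
  · intro x j
    rw [abs_mul, abs_div, abs_of_pos hδ, abs_of_nonneg (softProb_nonneg b x j)]
    have h1 := softProb_le_one b x j
    have h2 : |g1 ((softMax b x - r) / δ)| / δ ≤ G / δ := div_le_div_of_nonneg_right (b1 _) hδ.le
    calc _ ≤ G / δ * 1 := mul_le_mul h2 h1 (softProb_nonneg _ _ _) (by positivity)
      _ = _ := mul_one _
  · intro x j k
    have pj0 := softProb_nonneg b x j
    have pk0 := softProb_nonneg b x k
    have pj1 := softProb_le_one b x j
    have pk1 := softProb_le_one b x k
    have hA : |softProb b x j * softProb b x k| ≤ 1 := by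
      rw [abs_le]; constructor <;> nlinarith
    have hC : |(if j = k then softProb b x j else 0) - softProb b x j * softProb b x k| ≤ 1 := by
      rw [abs_le]; split_ifs <;> constructor <;> nlinarith
    have h2 := b2 ((softMax b x - r) / δ)
    have h1 := b1 ((softMax b x - r) / δ)
    calc _ ≤ G / δ ^ 2 * 1 + G / δ * b * 1 := by
          refine (abs_add_le _ _).trans (add_le_add ?_ ?_)
          · rw [abs_mul, abs_div, abs_of_pos (pow_pos hδ 2)]
            gcongr
          · rw [abs_mul, abs_mul, abs_div, abs_of_pos hδ, abs_of_pos hb0]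
            gcongr
      _ = G * ((1 + l) / δ ^ 2) := by rw [hb]; field_simp
      _ ≤ G * (22 * l / δ ^ 2) := by gcongr; linarith
      _ = _ := by ring
  · intro x u
    set U := ‖u‖ with hU
    have hU0 : 0 ≤ U := norm_nonneg _
    set m : ℕ → ℝ → ℝ := fun n t => softMom b (x + t • u) u n with hm
    have dm : ∀ n t, HasDerivAt (m n) (b * (m (n + 1) t - m n t * m 1 t)) t :=
      fun n t => hasDerivAt_softMom b x u n t
    have bm : ∀ n t, |m n t| ≤ U ^ n := fun n t => abs_softMom_le b _ u n
    set S : ℝ → ℝ := fun t => (softMax b (x + t • u) - r) / δ with hS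
    have dS : ∀ t, HasDerivAt S (m 1 t / δ) t := fun t =>
      ((hasDerivAt_softMax hb0.ne' x u t).sub_const r).div_const δ
    -- the Taylor estimate along the segment from `x` to `x + u`; the derivatives of `softMax` along
    -- it are the cumulants of `u` under the soft-max weights
    have T := taylor_two (q := fun t => g (S t)) (q1 := fun t => g1 (S t) * (m 1 t / δ))
      (q2 := fun t => g2 (S t) * (m 1 t / δ) * (m 1 t / δ) +
        g1 (S t) * (b * (m 2 t - m 1 t * m 1 t) / δ))
      (q3 := fun t => g3 (S t) * (m 1 t / δ) ^ 3 +
        3 * g2 (S t) * (m 1 t / δ) * (b * (m 2 t - m 1 t * m 1 t) / δ) +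
        g1 (S t) * (b ^ 2 * (m 3 t - m 2 t * m 1 t - 2 * m 1 t * (m 2 t - m 1 t * m 1 t)) / δ))
      (B := 22 * G * (l ^ 2 / δ ^ 3) * U ^ 3)
      (fun t => (hg0 _).comp t (dS t))
      (fun t => ((hg1 _).comp t (dS t)).mul ((dm 1 t).div_const δ))
      (fun t => by
        refine (((((hg2 _).comp t (dS t)).mul ((dm 1 t).div_const δ)).mul ((dm 1 t).div_const δ)).add
          (((hg1 _).comp t (dS t)).mul
            ((((dm 2 t).sub ((dm 1 t).mul (dm 1 t))).const_mul b).div_const δ))).congr_deriv ?_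
        simp only [Function.comp, Pi.mul_apply, Pi.sub_apply]
        ring)
      (fun t => by
        have m1 := bm 1 t
        have m2 := bm 2 t
        have m3 := bm 3 t
        rw [pow_one] at m1
        have v2 : |m 2 t - m 1 t * m 1 t| ≤ 2 * U ^ 2 := by
          refine (abs_sub _ _).trans ?_
          rw [abs_mul]
          nlinarith [abs_nonneg (m 1 t)]
        have v3 : |m 3 t - m 2 t * m 1 t - 2 * m 1 t * (m 2 t - m 1 t * m 1 t)| ≤ 6 * U ^ 3 := by
          have w1 : |m 2 t * m 1 t| ≤ U ^ 2 * U := by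
            rw [abs_mul]; exact mul_le_mul m2 m1 (abs_nonneg _) (by positivity)
          have w2 : |2 * m 1 t * (m 2 t - m 1 t * m 1 t)| ≤ 2 * U * (2 * U ^ 2) := by
            rw [abs_mul, abs_mul, abs_two]
            exact mul_le_mul (by linarith) v2 (abs_nonneg _) (by positivity)
          refine (abs_sub _ _).trans ?_
          have := abs_sub (m 3 t) (m 2 t * m 1 t)
          linarith
        have t1 : |g3 (S t) * (m 1 t / δ) ^ 3| ≤ G * (U / δ) ^ 3 := by
          rw [abs_mul, abs_pow, abs_div, abs_of_pos hδ]
          have := b3 (S t)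
          gcongr
        have t2 : |3 * g2 (S t) * (m 1 t / δ) * (b * (m 2 t - m 1 t * m 1 t) / δ)| ≤
            3 * G * (U / δ) * (b * (2 * U ^ 2) / δ) := by
          rw [abs_mul, abs_mul, abs_mul, abs_div, abs_div, abs_mul, abs_of_pos hδ, abs_of_pos hb0,
            abs_of_pos (by norm_num : (0 : ℝ) < 3)]
          have := b2 (S t)
          gcongr
        have t3 : |g1 (S t) * (b ^ 2 * (m 3 t - m 2 t * m 1 t -
            2 * m 1 t * (m 2 t - m 1 t * m 1 t)) / δ)| ≤ G * (b ^ 2 * (6 * U ^ 3) / δ) := by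
          rw [abs_mul, abs_div, abs_mul, abs_of_pos hδ, abs_of_pos (pow_pos hb0 2)]
          have := b1 (S t)
          gcongr
        refine ((abs_add_three _ _ _).trans (add_le_add (add_le_add t1 t2) t3)).trans ?_
        have e : G * (U / δ) ^ 3 + 3 * G * (U / δ) * (b * (2 * U ^ 2) / δ) +
            G * (b ^ 2 * (6 * U ^ 3) / δ) = G * (1 + 6 * l + 6 * l ^ 2) / δ ^ 3 * U ^ 3 := by
          rw [hb]; field_simp; ring
        have e' : 22 * G * (l ^ 2 / δ ^ 3) * U ^ 3 = G * (22 * l ^ 2) / δ ^ 3 * U ^ 3 := by ring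
        rw [e, e']
        gcongr
        nlinarith)
    refine le_trans (le_of_eq ?_) T
    have p0 : x + (0 : ℝ) • u = x := by simp
    have p1 : x + (1 : ℝ) • u = x + u := by simp
    simp only [hS, hm, p0, p1]
    have e1 : ∑ j, g1 ((softMax b x - r) / δ) / δ * softProb b x j * u j =
        g1 ((softMax b x - r) / δ) * (softMom b x u 1 / δ) := by
      unfold softMom
      rw [Finset.sum_div, Finset.mul_sum]
      exact Finset.sum_congr rfl fun j _ => by ring
    have e2 : ∑ j, ∑ k, (g2 ((softMax b x - r) / δ) / δ ^ 2 * (softProb b x j * softProb b x k) +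
        g1 ((softMax b x - r) / δ) / δ * b *
        ((if j = k then softProb b x j else 0) - softProb b x j * softProb b x k)) * (u j * u k) =
        g2 ((softMax b x - r) / δ) * (softMom b x u 1 / δ) * (softMom b x u 1 / δ) +
        g1 ((softMax b x - r) / δ) * (b * (softMom b x u 2 - softMom b x u 1 * softMom b x u 1) / δ) := by
      have q1 : softMom b x u 1 * softMom b x u 1 =
          ∑ j, ∑ k, softProb b x j * softProb b x k * (u j * u k) := by
        unfold softMom
        rw [Finset.sum_mul_sum]
        exact Finset.sum_congr rfl fun j _ => Finset.sum_congr rfl fun k _ => by ring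
      have q2 : softMom b x u 2 =
          ∑ j, ∑ k, (if j = k then softProb b x j else 0) * (u j * u k) := by
        unfold softMom
        refine Finset.sum_congr rfl fun j _ => ?_
        simp [pow_two]
      have : g2 ((softMax b x - r) / δ) * (softMom b x u 1 / δ) * (softMom b x u 1 / δ) +
          g1 ((softMax b x - r) / δ) *
            (b * (softMom b x u 2 - softMom b x u 1 * softMom b x u 1) / δ) =
          g2 ((softMax b x - r) / δ) / δ ^ 2 * (softMom b x u 1 * softMom b x u 1) +
          (g1 ((softMax b x - r) / δ) / δ * b * softMom b x u 2 -
          g1 ((softMax b x - r) / δ) / δ * b * (softMom b x u 1 * softMom b x u 1)) := by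
        ring
      rw [this, q1, q2]
      simp only [Finset.mul_sum, ← Finset.sum_sub_distrib, ← Finset.sum_add_distrib]
      exact Finset.sum_congr rfl fun j _ => Finset.sum_congr rfl fun k _ => by ring
    rw [e1, e2]

end TestFunction

/-! ### One step of the Lindeberg exchange -/

section Lindeberg
variable {d : ℕ}

/-- `f` is a bounded function with gradient `f'`, whose second-order Taylor polynomial with
Hessian `f''` is accurate to `K3 ‖u‖³` in the maximum norm, the entries of `f''` being at most
`K2`. -/
structure IsTest (f : (Fin d → ℝ) → ℝ) (f' : (Fin d → ℝ) → Fin d → ℝ)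
    (f'' : (Fin d → ℝ) → Fin d → Fin d → ℝ) (B K2 K3 : ℝ) : Prop where
  c0 : Continuous f
  c1 : ∀ j, Continuous fun x => f' x j
  c2 : ∀ j k, Continuous fun x => f'' x j k
  b0 : ∀ x, |f x| ≤ 1
  b1 : ∀ x j, |f' x j| ≤ B
  b2 : ∀ x j k, |f'' x j k| ≤ K2
  taylor : ∀ x u, |f (x + u) - f x - ∑ j, f' x j * u j -
    1 / 2 * ∑ j, ∑ k, f'' x j k * (u j * u k)| ≤ K3 * ‖u‖ ^ 3

variable {f : (Fin d → ℝ) → ℝ} {f' : (Fin d → ℝ) → Fin d → ℝ}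
  {f'' : (Fin d → ℝ) → Fin d → Fin d → ℝ} {B K2 K3 : ℝ}

lemma integrable_shift (ν : Measure (Fin d → ℝ)) [IsFiniteMeasure ν] {g : (Fin d → ℝ) → ℝ}
    (hg : Continuous g) {B : ℝ} (hB : ∀ x, |g x| ≤ B) (x : Fin d → ℝ) :
    Integrable (fun w => g (x + w)) ν :=
  Integrable.of_bound (by fun_prop) B (ae_of_all _ fun w => hB _)

lemma abs_integral_shift_le (ν : Measure (Fin d → ℝ)) [IsProbabilityMeasure ν]
    {g : (Fin d → ℝ) → ℝ} {B : ℝ} (hB : ∀ x, |g x| ≤ B) (x : Fin d → ℝ) :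
    |∫ w, g (x + w) ∂ν| ≤ B := by
  have := norm_integral_le_of_norm_le_const (μ := ν) (f := fun w => g (x + w)) (C := B)
    (ae_of_all _ fun w => hB _)
  simpa using this

/-- Smoothing a test function by a probability measure preserves the Taylor estimate. -/
lemma IsTest.taylor_smooth (h : IsTest f f' f'' B K2 K3) (ν : Measure (Fin d → ℝ))
    [IsProbabilityMeasure ν] (x u : Fin d → ℝ) :
    |∫ w, f (x + u + w) ∂ν - ∫ w, f (x + w) ∂ν - ∑ j, (∫ w, f' (x + w) j ∂ν) * u j -
      1 / 2 * ∑ j, ∑ k, (∫ w, f'' (x + w) j k ∂ν) * (u j * u k)| ≤ K3 * ‖u‖ ^ 3 := by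
  have i0 := integrable_shift ν h.c0 h.b0
  have i1 := fun j => integrable_shift ν (h.c1 j) (fun x => h.b1 x j) x
  have i2 := fun j k => integrable_shift ν (h.c2 j k) (fun x => h.b2 x j k) x
  have e : ∫ w, f (x + u + w) ∂ν - ∫ w, f (x + w) ∂ν - ∑ j, (∫ w, f' (x + w) j ∂ν) * u j -
      1 / 2 * ∑ j, ∑ k, (∫ w, f'' (x + w) j k ∂ν) * (u j * u k) =
      ∫ w, (f (x + u + w) - f (x + w) - ∑ j, f' (x + w) j * u j -
        1 / 2 * ∑ j, ∑ k, f'' (x + w) j k * (u j * u k)) ∂ν := by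
    rw [integral_sub, integral_sub, integral_sub (i0 _) (i0 _), integral_const_mul,
      integral_finsetSum, integral_finsetSum]
    · congr 2
      · exact Finset.sum_congr rfl fun j _ => (integral_mul_const _ _).symm
      · refine Finset.sum_congr rfl fun j _ => ?_
        rw [integral_finsetSum _ fun k _ => (i2 j k).mul_const _]
        exact Finset.sum_congr rfl fun k _ => (integral_mul_const _ _).symm
    · exact fun j _ => integrable_finsetSum _ fun k _ => (i2 j k).mul_const _
    · exact fun j _ => (i1 j).mul_const _
    · exact (i0 _).sub (i0 _)
    · exact integrable_finsetSum _ fun j _ => (i1 j).mul_const _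
    · exact ((i0 _).sub (i0 _)).sub (integrable_finsetSum _ fun j _ => (i1 j).mul_const _)
    · exact (integrable_finsetSum _ fun j _ => integrable_finsetSum _ fun k _ =>
        (i2 j k).mul_const _).const_mul _
  rw [e]
  have := norm_integral_le_of_norm_le_const (μ := ν) (C := K3 * ‖u‖ ^ 3)
    (f := fun w => f (x + u + w) - f (x + w) - ∑ j, f' (x + w) j * u j -
        1 / 2 * ∑ j, ∑ k, f'' (x + w) j k * (u j * u k)) (ae_of_all _ fun w => by
      have := h.taylor (x + w) u
      rw [add_right_comm] at this
      exact this)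
  simpa using this

/-- Adding an independent Gaussian of covariance `Q` changes the expectation of a test function
by half the trace pairing of `Q` with the smoothed Hessian, up to the third moment. -/
lemma IsTest.gauss_increment (h : IsTest f f' f'' B K2 K3) {P Q : Matrix (Fin d) (Fin d) ℝ}
    (hP : P.PosSemidef) (hQ : Q.PosSemidef) (h3 : Integrable (fun w => ‖w‖ ^ 3) (gaussN Q))
    (x : Fin d → ℝ) :
    |∫ w, f (x + w) ∂(gaussN (P + Q)) - ∫ w, f (x + w) ∂(gaussN P) -
      1 / 2 * ∑ j, ∑ k, (∫ w, f'' (x + w) j k ∂(gaussN P)) * Q j k| ≤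
      K3 * ∫ w, ‖w‖ ^ 3 ∂(gaussN Q) := by
  have e0 : ∫ w, f (x + w) ∂(gaussN (P + Q)) =
      ∫ y, ∫ w, f (x + y + w) ∂(gaussN P) ∂(gaussN Q) := by
    have hc := h.c0
    rw [gaussN_add hP hQ, integral_map (by fun_prop) (by fun_prop), integral_prod_symm]
    · refine integral_congr_ae (ae_of_all _ fun y => integral_congr_ae (ae_of_all _ fun w => ?_))
      simp only
      congr 1
      abel
    · exact Integrable.of_bound (by fun_prop) 1 (ae_of_all _ fun w => h.b0 _)
  have iφ : Integrable (fun y => ∫ w, f (x + y + w) ∂(gaussN P)) (gaussN Q) := by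
    refine Integrable.of_bound ?_ 1 (ae_of_all _ fun y => abs_integral_shift_le _ h.b0 _)
    have hc := h.c0
    refine StronglyMeasurable.aestronglyMeasurable ?_
    exact StronglyMeasurable.integral_prod_right' (f := fun p : (Fin d → ℝ) × (Fin d → ℝ) =>
      f (x + p.1 + p.2)) (Continuous.stronglyMeasurable (by fun_prop))
  have im := fun j => (gaussN_mean hQ j).1
  have ic := fun j k => (gaussN_cov hQ j k).1
  set a : Fin d → ℝ := fun j => ∫ w, f' (x + w) j ∂(gaussN P)
  set H : Fin d → Fin d → ℝ := fun j k => ∫ w, f'' (x + w) j k ∂(gaussN P)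
  set A := ∫ w, f (x + w) ∂(gaussN P)
  have e : ∫ w, f (x + w) ∂(gaussN (P + Q)) - A - 1 / 2 * ∑ j, ∑ k, H j k * Q j k =
      ∫ y, (∫ w, f (x + y + w) ∂(gaussN P) - A - ∑ j, a j * y j -
        1 / 2 * ∑ j, ∑ k, H j k * (y j * y k)) ∂(gaussN Q) := by
    rw [integral_sub, integral_sub, integral_sub iφ (integrable_const _), integral_const_mul,
      integral_finsetSum, integral_finsetSum, ← e0]
    · have e1 : ∑ j, ∫ y, a j * y j ∂(gaussN Q) = 0 :=
        Finset.sum_eq_zero fun j _ => by rw [integral_const_mul, (gaussN_mean hQ j).2, mul_zero]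
      have e2 : ∑ j, ∫ y, ∑ k, H j k * (y j * y k) ∂(gaussN Q) = ∑ j, ∑ k, H j k * Q j k := by
        refine Finset.sum_congr rfl fun j _ => ?_
        rw [integral_finsetSum _ fun k _ => (ic j k).const_mul _]
        exact Finset.sum_congr rfl fun k _ => by rw [integral_const_mul, (gaussN_cov hQ j k).2]
      rw [e1, e2]
      simp
    · exact fun j _ => integrable_finsetSum _ fun k _ => (ic j k).const_mul _
    · exact fun j _ => (im j).const_mul _
    · exact iφ.sub (integrable_const _)
    · exact integrable_finsetSum _ fun j _ => (im j).const_mul _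
    · exact (iφ.sub (integrable_const _)).sub (integrable_finsetSum _ fun j _ => (im j).const_mul _)
    · exact (integrable_finsetSum _ fun j _ => integrable_finsetSum _ fun k _ =>
        (ic j k).const_mul _).const_mul _
  rw [e, ← integral_const_mul]
  exact norm_integral_le_of_norm_le (f := fun y => ∫ w, f (x + y + w) ∂(gaussN P) - A -
    ∑ j, a j * y j - 1 / 2 * ∑ j, ∑ k, H j k * (y j * y k)) (h3.const_mul _)
    (ae_of_all _ fun y => h.taylor_smooth (gaussN P) x y)

variable {Ω : Type*} {m0 : MeasurableSpace Ω} {μ : Measure Ω} [IsProbabilityMeasure μ]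

/-- A conditional bound by a conditioning-measurable random variable that need not be
integrable. -/
lemma condExp_le_of_le {m : MeasurableSpace Ω} (hm : m ≤ m0) {W c : Ω → ℝ} (hW : Integrable W μ)
    (hc : Measurable[m] c) (h : W ≤ᵐ[μ] c) : μ[W | m] ≤ᵐ[μ] c := by
  have key : ∀ N : ℕ, ∀ᵐ ω ∂μ, |c ω| ≤ N → μ[W | m] ω ≤ c ω := by
    intro N
    set A : Set Ω := {ω | |c ω| ≤ N}
    have hA : MeasurableSet[m] A := hc (isClosed_le continuous_abs continuous_const).measurableSet
    have hcA : StronglyMeasurable[m] (A.indicator c) := (hc.stronglyMeasurable).indicator hA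
    have hci : Integrable (A.indicator c) μ :=
      Integrable.of_bound (hcA.mono hm).aestronglyMeasurable N (ae_of_all _ fun ω => by
        by_cases hω : ω ∈ A
        · rw [Set.indicator_of_mem hω]; exact hω
        · rw [Set.indicator_of_notMem hω]; simp)
    have h1 := condExp_indicator (m := m) hW hA
    have h2 : μ[A.indicator W | m] ≤ᵐ[μ] μ[A.indicator c | m] := by
      refine condExp_mono (hW.indicator (hm _ hA)) hci ?_
      filter_upwards [h] with ω hω
      exact Set.indicator_le_indicator hω
    rw [condExp_of_stronglyMeasurable hm hcA hci] at h2
    filter_upwards [h1, h2] with ω h1 h2 hω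
    rw [h1, Set.indicator_of_mem (show ω ∈ A from hω), Set.indicator_of_mem (show ω ∈ A from hω)] at h2
    exact h2
  filter_upwards [ae_all_iff.2 key] with ω hω
  obtain ⟨N, hN⟩ := exists_nat_ge |c ω|
  exact hω N hN

lemma abs_condExp_le {m : MeasurableSpace Ω} (hm : m ≤ m0) {U Y c : Ω → ℝ} (hU : Integrable U μ)
    (hY : Integrable Y μ) (hc : Measurable[m] c) (h : ∀ᵐ ω ∂μ, |U ω| ≤ Y ω + c ω) :
    ∀ᵐ ω ∂μ, |μ[U | m] ω| ≤ μ[Y | m] ω + c ω := by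
  have h1 := condExp_le_of_le hm (hU.sub hY) hc (by
    filter_upwards [h] with ω hω
    simp only [Pi.sub_apply]
    linarith [le_abs_self (U ω)])
  have h2 := condExp_le_of_le hm (hU.neg.sub hY) hc (by
    filter_upwards [h] with ω hω
    simp only [Pi.sub_apply, Pi.neg_apply]
    linarith [neg_abs_le (U ω)])
  filter_upwards [h1, h2, condExp_sub hU hY m, condExp_sub hU.neg hY m, condExp_neg U m]
    with ω h1 h2 e1 e2 e3
  rw [e1] at h1
  rw [e2] at h2
  simp only [Pi.sub_apply, Pi.neg_apply] at h1 h2 e3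
  rw [e3] at h2
  rw [abs_le]
  constructor <;> linarith

lemma condExp_mul_eq_zero {m G : MeasurableSpace Ω} (hmG : m ≤ G) (hG : G ≤ m0) {a Y : Ω → ℝ} {B : ℝ}
    (ha : StronglyMeasurable[G] a) (hB : ∀ ω, |a ω| ≤ B) (hY : Integrable Y μ)
    (h : μ[Y | G] =ᵐ[μ] 0) :
    Integrable (fun ω => a ω * Y ω) μ ∧ μ[fun ω => a ω * Y ω | m] =ᵐ[μ] 0 := by
  have hi : Integrable (fun ω => a ω * Y ω) μ :=
    hY.bdd_mul (ha.mono hG).aestronglyMeasurable (ae_of_all _ hB)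
  refine ⟨hi, ?_⟩
  have h1 : μ[fun ω => a ω * Y ω | G] =ᵐ[μ] 0 := by
    refine (condExp_mul_of_stronglyMeasurable_left ha hi hY).trans ?_
    filter_upwards [h] with ω hω
    simp [hω]
  have h2 := (condExp_condExp_of_le (μ := μ) (f := fun ω => a ω * Y ω) hmG hG).symm
  refine h2.trans ((condExp_congr_ae h1).trans ?_)
  rw [condExp_zero]

/-- **One step of the Lindeberg exchange**: replacing the martingale increment `X` by a Gaussian
of covariance `Q = E[X Xᵀ | m]`. -/
lemma IsTest.step (h : IsTest f f' f'' B K2 K3) (hK3 : 0 ≤ K3)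
    {m G : MeasurableSpace Ω} (hmG : m ≤ G) (hG : G ≤ m0)
    {S X : Ω → Fin d → ℝ} (hS : Measurable[G] S) (hX : Measurable[m0] X)
    {P Q : Ω → Matrix (Fin d) (Fin d) ℝ} (hPm : ∀ j k, Measurable[m] fun ω => P ω j k)
    (hQm : ∀ j k, Measurable[m] fun ω => Q ω j k) (hP : ∀ ω, (P ω).PosSemidef)
    (hQ : ∀ ω, (Q ω).PosSemidef)
    (iX : ∀ j, Integrable (fun ω => X ω j) μ) (iXX : ∀ j k, Integrable (fun ω => X ω j * X ω k) μ)
    (i3 : Integrable (fun ω => ‖X ω‖ ^ 3) μ)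
    (hX0 : ∀ j, μ[fun ω => X ω j | G] =ᵐ[μ] 0)
    (hQX : ∀ j k, (fun ω => Q ω j k) =ᵐ[μ] μ[fun ω => X ω j * X ω k | m])
    {c : Ω → ℝ} (hc : Measurable[m] c)
    (h3 : ∀ ω, Integrable (fun w => ‖w‖ ^ 3) (gaussN (Q ω)) ∧ ∫ w, ‖w‖ ^ 3 ∂(gaussN (Q ω)) ≤ c ω) :
    ∀ᵐ ω ∂μ, |μ[fun ω => ∫ w, f (S ω + X ω + w) ∂(gaussN (P ω)) | m] ω -
        μ[fun ω => ∫ w, f (S ω + w) ∂(gaussN (P ω + Q ω)) | m] ω| ≤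
      K2 * μ[fun ω => ∑ j, ∑ k, |μ[fun ω => X ω j * X ω k | G] ω - Q ω j k| | m] ω +
        K3 * (μ[fun ω => ‖X ω‖ ^ 3 | m] ω + c ω) := by
  have hm : m ≤ m0 := hmG.trans hG
  have hPG : ∀ j k, Measurable[G] fun ω => P ω j k := fun j k => (hPm j k).mono hmG le_rfl
  have hP0 : ∀ j k, Measurable[m0] fun ω => P ω j k := fun j k => (hPm j k).mono hm le_rfl
  have hQ0 : ∀ j k, Measurable[m0] fun ω => Q ω j k := fun j k => (hQm j k).mono hm le_rfl
  have hS0 : Measurable[m0] S := hS.mono hG le_rfl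
  set C : Fin d → Fin d → Ω → ℝ := fun j k => μ[fun ω => X ω j * X ω k | G] with hC
  set a : Fin d → Ω → ℝ := fun j ω => ∫ w, f' (S ω + w) j ∂(gaussN (P ω)) with ha
  set H : Fin d → Fin d → Ω → ℝ := fun j k ω => ∫ w, f'' (S ω + w) j k ∂(gaussN (P ω)) with hH
  have ma : ∀ j, StronglyMeasurable[G] (a j) := fun j =>
    measurable_integral_gaussN hPG hS (h.c1 j).measurable
  have mH : ∀ j k, StronglyMeasurable[G] (H j k) := fun j k =>
    measurable_integral_gaussN hPG hS (h.c2 j k).measurable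
  have ba : ∀ j ω, |a j ω| ≤ B := fun j ω =>
    abs_integral_shift_le (gaussN (P ω)) (fun x => h.b1 x j) (S ω)
  have bH : ∀ j k ω, |H j k ω| ≤ K2 := fun j k ω =>
    abs_integral_shift_le (gaussN (P ω)) (fun x => h.b2 x j k) (S ω)
  set D1 : Ω → ℝ := fun ω => ∫ w, f (S ω + X ω + w) ∂(gaussN (P ω)) with hD1
  set D2 : Ω → ℝ := fun ω => ∫ w, f (S ω + w) ∂(gaussN (P ω + Q ω)) with hD2
  have iD1 : Integrable D1 μ := by
    refine Integrable.of_bound ?_ 1 (ae_of_all _ fun ω => abs_integral_shift_le _ h.b0 _)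
    exact (measurable_integral_gaussN hP0 (hS0.add hX) h.c0.measurable).aestronglyMeasurable
  have iD2 : Integrable D2 μ := by
    refine Integrable.of_bound ?_ 1 (ae_of_all _ fun ω => abs_integral_shift_le _ h.b0 _)
    exact (measurable_integral_gaussN (P := fun ω => P ω + Q ω)
      (fun j k => (hP0 j k).add (hQ0 j k)) hS0 h.c0.measurable).aestronglyMeasurable
  have iC : ∀ j k, Integrable (C j k) μ := fun j k => integrable_condExp
  have iQ : ∀ j k, Integrable (fun ω => Q ω j k) μ := fun j k =>
    integrable_condExp.congr (hQX j k).symm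
  -- the two families of terms with vanishing conditional expectation
  have z1 := fun j => condExp_mul_eq_zero hmG hG (ma j) (ba j) (iX j) (hX0 j)
  have z2 := fun j k => condExp_mul_eq_zero hmG hG (mH j k) (bH j k)
    (Y := fun ω => C j k ω - X ω j * X ω k) ((iC j k).sub (iXX j k)) (by
      refine (condExp_sub (iC j k) (iXX j k) G).trans ?_
      have e : μ[C j k | G] = C j k :=
        condExp_of_stronglyMeasurable hG stronglyMeasurable_condExp (iC j k)
      filter_upwards with ω
      rw [Pi.sub_apply, e]
      simp [hC])
  -- adding the conditionally centred `Z` removes the gradient term and replaces the products of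
  -- the coordinates of `X` by their conditional expectations given `G`
  set Z : Ω → ℝ := fun ω => (∑ j, ∑ k, H j k ω * (C j k ω - X ω j * X ω k)) * (1 / 2) -
    ∑ j, a j ω * X ω j with hZ
  have iZ1 : Integrable (fun ω => ∑ j, ∑ k, H j k ω * (C j k ω - X ω j * X ω k)) μ :=
    integrable_finsetSum _ fun j _ => integrable_finsetSum _ fun k _ => (z2 j k).1
  have iZ2 : Integrable (fun ω => ∑ j, a j ω * X ω j) μ := integrable_finsetSum _ fun j _ => (z1 j).1
  have iZ : Integrable Z μ := (iZ1.mul_const _).sub iZ2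
  have zZ : μ[Z | m] =ᵐ[μ] 0 := by
    have e2 : μ[fun ω => ∑ j, a j ω * X ω j | m] =ᵐ[μ] 0 := by
      have e := condExp_finsetSum (μ := μ) (m := m) (s := Finset.univ)
        (f := fun j ω => a j ω * X ω j) fun j _ => (z1 j).1
      have e' : (∑ j, fun ω => a j ω * X ω j) = fun ω => ∑ j, a j ω * X ω j := by
        ext ω; simp
      rw [e'] at e
      refine e.trans ?_
      filter_upwards [ae_all_iff.2 fun j => (z1 j).2] with ω hω
      simp [hω]
    have e1 : μ[fun ω => ∑ j, ∑ k, H j k ω * (C j k ω - X ω j * X ω k) | m] =ᵐ[μ] 0 := by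
      have e := condExp_finsetSum (μ := μ) (m := m) (s := (Finset.univ : Finset (Fin d × Fin d)))
        (f := fun p ω => H p.1 p.2 ω * (C p.1 p.2 ω - X ω p.1 * X ω p.2)) fun p _ => (z2 p.1 p.2).1
      have e' : (∑ p : Fin d × Fin d, fun ω => H p.1 p.2 ω * (C p.1 p.2 ω - X ω p.1 * X ω p.2)) =
          fun ω => ∑ j, ∑ k, H j k ω * (C j k ω - X ω j * X ω k) := by
        ext ω; simp [Fintype.sum_prod_type]
      rw [e'] at e
      refine e.trans ?_
      filter_upwards [ae_all_iff.2 fun p : Fin d × Fin d => (z2 p.1 p.2).2] with ω hω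
      simp [hω]
    refine (condExp_sub (iZ1.mul_const _) iZ2 m).trans ?_
    have e3 := condExp_smul (μ := μ) (1 / 2 : ℝ)
      (fun ω => ∑ j, ∑ k, H j k ω * (C j k ω - X ω j * X ω k)) m
    have e4 : ((1 / 2 : ℝ) • fun ω => ∑ j, ∑ k, H j k ω * (C j k ω - X ω j * X ω k)) =
        fun ω => (∑ j, ∑ k, H j k ω * (C j k ω - X ω j * X ω k)) * (1 / 2) := by
      ext ω; simp [mul_comm]
    rw [e4] at e3
    filter_upwards [e1, e2, e3] with ω e1 e2 e3
    rw [Pi.sub_apply, e3, e2, Pi.smul_apply, e1]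
    simp
  set U : Ω → ℝ := fun ω => D1 ω - D2 ω + Z ω with hU
  have iU : Integrable U μ := (iD1.sub iD2).add iZ
  have iXi3 := i3
  set Y : Ω → ℝ := fun ω => K2 * (∑ j, ∑ k, |C j k ω - Q ω j k|) + K3 * ‖X ω‖ ^ 3 with hY
  have iY1 : Integrable (fun ω => ∑ j, ∑ k, |C j k ω - Q ω j k|) μ :=
    integrable_finsetSum _ fun j _ => integrable_finsetSum _ fun k _ => ((iC j k).sub (iQ j k)).abs
  have iY : Integrable Y μ := (iY1.const_mul _).add (i3.const_mul _)
  have hpt : ∀ ω, |U ω| ≤ Y ω + K3 * c ω := by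
    intro ω
    have t1 := h.taylor_smooth (gaussN (P ω)) (S ω) (X ω)
    have t2 := h.gauss_increment (hP ω) (hQ ω) (h3 ω).1 (S ω)
    have t3 : |1 / 2 * ∑ j, ∑ k, H j k ω * (C j k ω - Q ω j k)| ≤
        K2 * ∑ j, ∑ k, |C j k ω - Q ω j k| := by
      have s1 : |∑ j, ∑ k, H j k ω * (C j k ω - Q ω j k)| ≤ ∑ j, ∑ k, K2 * |C j k ω - Q ω j k| := by
        refine (Finset.abs_sum_le_sum_abs _ _).trans (Finset.sum_le_sum fun j _ => ?_)
        refine (Finset.abs_sum_le_sum_abs _ _).trans (Finset.sum_le_sum fun k _ => ?_)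
        rw [abs_mul]
        exact mul_le_mul_of_nonneg_right (bH j k ω) (abs_nonneg _)
      rw [abs_mul, abs_of_pos (by norm_num : (0 : ℝ) < 1 / 2)]
      simp only [← Finset.mul_sum] at s1
      linarith [abs_nonneg (∑ j, ∑ k, H j k ω * (C j k ω - Q ω j k))]
    have t4 := mul_le_mul_of_nonneg_left (h3 ω).2 hK3
    have e : U ω = (D1 ω - ∫ w, f (S ω + w) ∂(gaussN (P ω)) - ∑ j, a j ω * X ω j -
        1 / 2 * ∑ j, ∑ k, H j k ω * (X ω j * X ω k)) -
        (D2 ω - ∫ w, f (S ω + w) ∂(gaussN (P ω)) - 1 / 2 * ∑ j, ∑ k, H j k ω * Q ω j k) +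
        1 / 2 * ∑ j, ∑ k, H j k ω * (C j k ω - Q ω j k) := by
      simp only [hU, hZ, mul_sub, Finset.sum_sub_distrib]
      ring
    rw [e]
    refine (abs_add_le _ _).trans ?_
    refine (add_le_add_left (abs_sub _ _) _).trans ?_
    simp only [hY]
    linarith
  have fin := abs_condExp_le hm iU iY (hc.const_mul K3) (ae_of_all _ hpt)
  have eU := condExp_add (iD1.sub iD2) iZ m
  have eD := condExp_sub iD1 iD2 m
  have eY := condExp_add (iY1.const_mul K2) (i3.const_mul K3) m
  have eY1 := condExp_smul (μ := μ) K2 (fun ω => ∑ j, ∑ k, |C j k ω - Q ω j k|) m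
  have eY2 := condExp_smul (μ := μ) K3 (fun ω => ‖X ω‖ ^ 3) m
  filter_upwards [fin, eU, eD, eY, eY1, eY2, zZ] with ω fin eU eD eY eY1 eY2 zZ
  have eU' : μ[U | m] ω = μ[D1 | m] ω - μ[D2 | m] ω := by
    refine eU.trans ?_
    rw [Pi.add_apply, eD, zZ]
    simp
  have eY' : μ[Y | m] ω = K2 * μ[fun ω => ∑ j, ∑ k, |C j k ω - Q ω j k| | m] ω +
      K3 * μ[fun ω => ‖X ω‖ ^ 3 | m] ω := by
    refine eY.trans ?_
    rw [Pi.add_apply]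
    exact congrArg₂ (· + ·) eY1 eY2
  rw [eU', eY'] at fin
  linarith

end Lindeberg

/-! ### Conditional laws and conditional covariances -/

section Conditional
variable {d : ℕ} {Ω : Type*} {m0 : MeasurableSpace Ω} {μ : Measure Ω} [IsProbabilityMeasure μ]

lemma denseRange_rat : DenseRange (fun (q : Fin d → ℚ) (j : Fin d) => (q j : ℝ)) :=
  DenseRange.piMap (f := fun (_ : Fin d) (q : ℚ) => (q : ℝ)) fun _ => Rat.denseRange_cast

/-- The conditional law of `T` given a σ-field generated by a random element `Z`. Only the space of
values of `T` needs to be standard Borel. -/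
lemma exists_condLaw_comap {β : Type*} [mβ : MeasurableSpace β] {Z : Ω → β} (hZ : Measurable Z)
    {T : Ω → Fin d → ℝ} (hT : Measurable T) :
    ∃ κ : Ω → Measure (Fin d → ℝ), (∀ ω, IsProbabilityMeasure (κ ω)) ∧
      (∀ g : (Fin d → ℝ) → ℂ, Continuous g → (∀ x, ‖g x‖ ≤ 1) →
        μ[fun ω => g (T ω) | mβ.comap Z] =ᵐ[μ] fun ω => ∫ y, g y ∂(κ ω)) ∧
      (∀ s, MeasurableSet s →
        (fun ω => (κ ω).real s) =ᵐ[μ] μ[(T ⁻¹' s).indicator fun _ => (1 : ℝ) | mβ.comap Z]) := by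
  refine ⟨fun ω => condDistrib T Z μ (Z ω), fun ω => inferInstance, fun g hg hb => ?_,
    fun s hs => condDistrib_ae_eq_condExp hZ hT hs⟩
  exact condExp_ae_eq_integral_condDistrib hZ hT.aemeasurable hg.stronglyMeasurable
    (Integrable.of_bound (hg.measurable.comp hT).aestronglyMeasurable 1 (ae_of_all _ fun ω => hb _))

/-- Regular conditional law of a random vector. -/
lemma exists_condLaw {m : MeasurableSpace Ω} (hm : m ≤ m0)
    {T : Ω → Fin d → ℝ} (hT : Measurable[m0] T) :
    ∃ κ : Ω → Measure (Fin d → ℝ), (∀ ω, IsProbabilityMeasure (κ ω)) ∧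
      (∀ g : (Fin d → ℝ) → ℂ, Continuous g → (∀ x, ‖g x‖ ≤ 1) →
        μ[fun ω => g (T ω) | m] =ᵐ[μ] fun ω => ∫ y, g y ∂(κ ω)) ∧
      (∀ s, MeasurableSet s →
        (fun ω => (κ ω).real s) =ᵐ[μ] μ[(T ⁻¹' s).indicator fun _ => (1 : ℝ) | m]) := by
  have h := @exists_condLaw_comap d Ω m0 μ _ Ω m id (measurable_id'' hm) T hT
  rwa [MeasurableSpace.comap_id] at h

/-- A random vector whose conditional characteristic function is that of `N(0, V)` has
conditional law `N(0, V)`. -/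
lemma condCdf_gauss {m : MeasurableSpace Ω} (hm : m ≤ m0)
    {T : Ω → Fin d → ℝ} (hT : Measurable[m0] T) {V : Ω → Matrix (Fin d) (Fin d) ℝ}
    (hV : ∀ ω, (V ω).PosSemidef)
    (hcf : ∀ t : Fin d → ℝ,
      μ[fun ω => Complex.exp (Complex.I * ((∑ j, t j * T ω j : ℝ) : ℂ)) | m] =ᵐ[μ] fun ω =>
        Complex.exp (((-(1 / 2) * ∑ j, ∑ k, t j * V ω j k * t k : ℝ) : ℂ)))
    {s : Set (Fin d → ℝ)} (hs : MeasurableSet s) :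
    (fun ω => (gaussN (V ω)).real s) =ᵐ[μ] μ[(T ⁻¹' s).indicator fun _ => (1 : ℝ) | m] := by
  obtain ⟨κ, hκ, hint, hset⟩ := exists_condLaw (μ := μ) hm hT
  have hn : ∀ (t : Fin d → ℝ) (w : Fin d → ℝ),
      ‖Complex.exp (Complex.I * ((∑ j, t j * w j : ℝ) : ℂ))‖ ≤ 1 := fun t w => by
    rw [mul_comm, Complex.norm_exp_ofReal_mul_I]
  have hq : ∀ᵐ ω ∂μ, ∀ q : Fin d → ℚ,
      ∫ y, Complex.exp (Complex.I * ((∑ j, (q j : ℝ) * y j : ℝ) : ℂ)) ∂(κ ω) =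
        Complex.exp (((-(1 / 2) * ∑ j, ∑ k, (q j : ℝ) * V ω j k * q k : ℝ) : ℂ)) := by
    refine ae_all_iff.2 fun q => ?_
    have h1 := hint _ (continuous_cf fun j => (q j : ℝ)) (hn _)
    filter_upwards [h1, hcf fun j => (q j : ℝ)] with ω h1 h2
    exact h1.symm.trans h2
  filter_upwards [hq, hset s hs] with ω hq hset
  have := hκ ω
  have heq : κ ω = gaussN (V ω) := by
    -- both characteristic functions are continuous and agree at the rational points
    refine eq_gaussN (hV ω) (κ ω) fun t => ?_
    have c1 : Continuous fun t : Fin d → ℝ =>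
        ∫ y, Complex.exp (Complex.I * ((∑ j, t j * y j : ℝ) : ℂ)) ∂(κ ω) := by
      refine continuous_of_dominated (bound := fun _ => 1)
        (fun t => (continuous_cf t).aestronglyMeasurable) (fun t => ae_of_all _ (hn t))
        (integrable_const _) (ae_of_all _ fun y => ?_)
      exact Complex.continuous_exp.comp (continuous_const.mul (Complex.continuous_ofReal.comp
        (by fun_prop)))
    have c2 : Continuous fun t : Fin d → ℝ =>
        Complex.exp (((-(1 / 2) * ∑ j, ∑ k, t j * V ω j k * t k : ℝ) : ℂ)) :=
      Complex.continuous_exp.comp (Complex.continuous_ofReal.comp (by fun_prop))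
    exact congrFun (denseRange_rat.equalizer c1 c2 (funext hq)) t
  rw [← heq]
  exact hset

/-- The conditional second-moment matrix has a version which is measurable and positive
semidefinite everywhere. -/
lemma exists_condCov {m : MeasurableSpace Ω} {X : Ω → Fin d → ℝ}
    (iXX : ∀ j k, Integrable (fun ω => X ω j * X ω k) μ) :
    ∃ Q : Ω → Matrix (Fin d) (Fin d) ℝ, (∀ j k, Measurable[m] fun ω => Q ω j k) ∧
      (∀ ω, (Q ω).PosSemidef) ∧
      ∀ j k, (fun ω => Q ω j k) =ᵐ[μ] μ[fun ω => X ω j * X ω k | m] := by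
  classical
  set R : Fin d → Fin d → Ω → ℝ := fun j k => μ[fun ω => X ω j * X ω k | m] with hR
  have mR : ∀ j k, Measurable[m] (R j k) := fun j k => stronglyMeasurable_condExp.measurable
  have sR : ∀ j k, R j k = R k j := fun j k => by simp only [hR, mul_comm]
  -- positivity on the countably many rational vectors holds almost surely and suffices by
  -- continuity; off this event the matrix is replaced by `0`
  set E : Set Ω := {ω | ∀ q : Fin d → ℚ, 0 ≤ ∑ j, ∑ k, (q j : ℝ) * R j k ω * q k} with hE
  have mE : MeasurableSet[m] E := by
    have : E = ⋂ q : Fin d → ℚ, {ω | 0 ≤ ∑ j, ∑ k, (q j : ℝ) * R j k ω * q k} := by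
      ext ω; simp [hE]
    rw [this]
    refine MeasurableSet.iInter fun q => measurableSet_le measurable_const ?_
    exact Finset.measurable_fun_sum _ fun j _ => Finset.measurable_fun_sum _ fun k _ =>
      ((mR j k).const_mul _).mul_const _
  have aE : ∀ᵐ ω ∂μ, ω ∈ E := by
    refine ae_all_iff.2 fun q => ?_
    have h0 : 0 ≤ᵐ[μ] μ[fun ω => (∑ j, (q j : ℝ) * X ω j) ^ 2 | m] :=
      condExp_nonneg (ae_of_all _ fun ω => sq_nonneg _)
    have e := condExp_finsetSum (μ := μ) (m := m) (s := (Finset.univ : Finset (Fin d × Fin d)))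
      (f := fun p => ((q p.1 : ℝ) * q p.2) • fun ω => X ω p.1 * X ω p.2)
      fun p _ => (iXX p.1 p.2).smul _
    have e' : (∑ p : Fin d × Fin d, ((q p.1 : ℝ) * q p.2) • fun ω => X ω p.1 * X ω p.2) =
        fun ω => (∑ j, (q j : ℝ) * X ω j) ^ 2 := by
      ext ω
      rw [pow_two, Finset.sum_mul_sum]
      simp only [Finset.sum_apply, Fintype.sum_prod_type, Pi.smul_apply, smul_eq_mul]
      exact Finset.sum_congr rfl fun j _ => Finset.sum_congr rfl fun k _ => by ring
    rw [e'] at e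
    have es : ∀ᵐ ω ∂μ, ∀ p : Fin d × Fin d, μ[((q p.1 : ℝ) * q p.2) •
        (fun ω => X ω p.1 * X ω p.2) | m] ω = ((q p.1 : ℝ) * q p.2) * R p.1 p.2 ω :=
      ae_all_iff.2 fun p => condExp_smul _ _ _
    filter_upwards [h0, e, es] with ω h0 e es
    rw [e] at h0
    simp only [Finset.sum_apply, es, Fintype.sum_prod_type, Pi.zero_apply] at h0
    refine h0.trans_eq ?_
    exact Finset.sum_congr rfl fun j _ => Finset.sum_congr rfl fun k _ => by ring
  refine ⟨fun ω => if ω ∈ E then Matrix.of fun j k => R j k ω else 0, fun j k => ?_, fun ω => ?_,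
    fun j k => ?_⟩
  · have : (fun ω => (if ω ∈ E then Matrix.of fun j k => R j k ω else 0 : Matrix _ _ ℝ) j k) =
        fun ω => if ω ∈ E then R j k ω else 0 := by
      ext ω; split_ifs <;> simp
    rw [this]
    exact Measurable.ite mE (mR j k) measurable_const
  · beta_reduce
    split_ifs with h
    · refine Matrix.PosSemidef.of_dotProduct_mulVec_nonneg ?_ fun x => ?_
      · ext j k
        simp [sR k j]
      · have hx := denseRange_rat.induction_on
          (p := fun x : Fin d → ℝ => 0 ≤ ∑ j, ∑ k, x j * R j k ω * x k) x
          (isClosed_le continuous_const (by fun_prop)) h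
        refine hx.trans_eq ?_
        simp only [star_trivial, dotProduct, Matrix.mulVec, Finset.mul_sum, Matrix.of_apply]
        exact Finset.sum_congr rfl fun j _ => Finset.sum_congr rfl fun k _ => by ring
    · exact Matrix.PosSemidef.zero
  · filter_upwards [aE] with ω h
    simp [h, hR]

lemma integrable_coord {X : Ω → Fin d → ℝ} (hX : Measurable X)
    (i3 : Integrable (fun ω => ‖X ω‖ ^ 3) μ) (j : Fin d) : Integrable (fun ω => X ω j) μ := by
  refine ((integrable_const (1 : ℝ)).add i3).mono' (by fun_prop) (ae_of_all _ fun ω => ?_)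
  simp only [Pi.add_apply]
  refine (norm_le_pi_norm (X ω) j).trans ?_
  have h0 := norm_nonneg (X ω)
  rcases le_total ‖X ω‖ 1 with h | h
  · linarith [pow_nonneg h0 3]
  · nlinarith [mul_nonneg h0 (sub_nonneg.2 h), mul_nonneg (mul_nonneg h0 h0) (sub_nonneg.2 h)]

lemma integrable_sq_coord {X : Ω → Fin d → ℝ} (hX : Measurable X)
    (i3 : Integrable (fun ω => ‖X ω‖ ^ 3) μ) (j : Fin d) :
    Integrable (fun ω => X ω j ^ 2) μ := by
  refine ((integrable_const (1 : ℝ)).add i3).mono' (by fun_prop) (ae_of_all _ fun ω => ?_)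
  simp only [Pi.add_apply]
  rw [norm_pow]
  refine (pow_le_pow_left₀ (norm_nonneg _) (norm_le_pi_norm (X ω) j) 2).trans ?_
  have h0 := norm_nonneg (X ω)
  rcases le_total ‖X ω‖ 1 with h | h
  · nlinarith [pow_nonneg h0 3]
  · nlinarith [mul_nonneg (mul_nonneg h0 h0) (sub_nonneg.2 h)]

lemma integrable_mul_of_sq {a b : Ω → ℝ} (ha : Measurable a) (hb : Measurable b)
    (ia : Integrable (fun ω => a ω ^ 2) μ) (ib : Integrable (fun ω => b ω ^ 2) μ) :
    Integrable (fun ω => a ω * b ω) μ := by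
  refine (ia.add ib).mono' (by fun_prop) (ae_of_all _ fun ω => ?_)
  simp only [Pi.add_apply]
  rw [Real.norm_eq_abs, abs_le]
  constructor <;> nlinarith [sq_nonneg (a ω + b ω), sq_nonneg (a ω - b ω)]

/-- Orthogonality of martingale increments, conditionally on an earlier σ-field. -/
lemma condExp_cross {m G : MeasurableSpace Ω} (hmG : m ≤ G) (hG : G ≤ m0) {a b : Ω → ℝ}
    (ha : Measurable[G] a) (hab : Integrable (fun ω => a ω * b ω) μ) (hb : Integrable b μ)
    (h : μ[b | G] =ᵐ[μ] 0) : μ[fun ω => a ω * b ω | m] =ᵐ[μ] 0 := by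
  have h1 : μ[fun ω => a ω * b ω | G] =ᵐ[μ] 0 := by
    refine (condExp_mul_of_stronglyMeasurable_left ha.stronglyMeasurable hab hb).trans ?_
    filter_upwards [h] with ω hω
    simp [hω]
  have h2 := (condExp_condExp_of_le (μ := μ) (f := fun ω => a ω * b ω) hmG hG).symm
  refine h2.trans ((condExp_congr_ae h1).trans ?_)
  rw [condExp_zero]

/-- The conditional covariance of a martingale is the sum of those of its increments. -/
lemma condCov_sum {n : ℕ} {F : ℕ → MeasurableSpace Ω} {X : ℕ → Ω → Fin d → ℝ} (hF : Monotone F)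
    (hF0 : ∀ k, F k ≤ m0) (hX : ∀ i ∈ Finset.Icc 1 n, Measurable[F i] (X i))
    (hX0 : ∀ i ∈ Finset.Icc 1 n, ∀ j, μ[fun ω => X i ω j | F (i - 1)] =ᵐ[μ] 0)
    (i3 : ∀ i ∈ Finset.Icc 1 n, Integrable (fun ω => ‖X i ω‖ ^ 3) μ) (j k : Fin d) :
    μ[fun ω => (∑ i ∈ Finset.Icc 1 n, X i ω j) * (∑ i ∈ Finset.Icc 1 n, X i ω k) | F 0] =ᵐ[μ]
      fun ω => ∑ i ∈ Finset.Icc 1 n, μ[fun ω => X i ω j * X i ω k | F 0] ω := by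
  have hXm : ∀ i ∈ Finset.Icc 1 n, Measurable[m0] (X i) := fun i hi => (hX i hi).mono (hF0 i) le_rfl
  have hc : ∀ i ∈ Finset.Icc 1 n, ∀ j, Measurable[m0] fun ω => X i ω j := fun i hi j =>
    (measurable_pi_apply j).comp (hXm i hi)
  have hcF : ∀ i ∈ Finset.Icc 1 n, ∀ j, Measurable[F i] fun ω => X i ω j := fun i hi j =>
    (measurable_pi_apply j).comp (hX i hi)
  have ii : ∀ i ∈ Finset.Icc 1 n, ∀ l ∈ Finset.Icc 1 n, Integrable (fun ω => X i ω j * X l ω k) μ :=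
    fun i hi l hl => integrable_mul_of_sq (hc i hi j) (hc l hl k)
      (integrable_sq_coord (hXm i hi) (i3 i hi) j) (integrable_sq_coord (hXm l hl) (i3 l hl) k)
  have hz : ∀ i ∈ Finset.Icc 1 n, ∀ l ∈ Finset.Icc 1 n, i ≠ l →
      μ[fun ω => X i ω j * X l ω k | F 0] =ᵐ[μ] 0 := by
    intro i hi l hl hil
    rcases lt_or_gt_of_ne hil with h | h
    · exact condExp_cross (hF (Nat.zero_le _)) (hF0 (l - 1))
        ((hcF i hi j).mono (hF (by omega)) le_rfl) (ii i hi l hl)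
        (integrable_coord (hXm l hl) (i3 l hl) k) (hX0 l hl k)
    · have e : (fun ω => X i ω j * X l ω k) = fun ω => X l ω k * X i ω j := by
        ext ω; ring
      rw [e]
      exact condExp_cross (hF (Nat.zero_le _)) (hF0 (i - 1))
        ((hcF l hl k).mono (hF (by omega)) le_rfl) (by rw [← e]; exact ii i hi l hl)
        (integrable_coord (hXm i hi) (i3 i hi) j) (hX0 i hi j)
  have e := condExp_finsetSum (μ := μ) (m := F 0) (s := Finset.Icc 1 n ×ˢ Finset.Icc 1 n)
    (f := fun p ω => X p.1 ω j * X p.2 ω k) fun p hp =>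
      ii p.1 (Finset.mem_product.1 hp).1 p.2 (Finset.mem_product.1 hp).2
  have e' : (∑ p ∈ Finset.Icc 1 n ×ˢ Finset.Icc 1 n, fun ω => X p.1 ω j * X p.2 ω k) =
      fun ω => (∑ i ∈ Finset.Icc 1 n, X i ω j) * (∑ i ∈ Finset.Icc 1 n, X i ω k) := by
    ext ω
    rw [Finset.sum_mul_sum, ← Finset.sum_product']
    simp
  rw [e'] at e
  have hz' : ∀ᵐ ω ∂μ, ∀ p : ℕ × ℕ, p.1 ∈ Finset.Icc 1 n → p.2 ∈ Finset.Icc 1 n → p.1 ≠ p.2 →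
      μ[fun ω => X p.1 ω j * X p.2 ω k | F 0] ω = 0 := by
    refine ae_all_iff.2 fun p => ?_
    by_cases h : p.1 ∈ Finset.Icc 1 n ∧ p.2 ∈ Finset.Icc 1 n ∧ p.1 ≠ p.2
    · filter_upwards [hz p.1 h.1 p.2 h.2.1 h.2.2] with ω hω _ _ _ using hω
    · exact ae_of_all _ fun ω h1 h2 h3 => absurd ⟨h1, h2, h3⟩ h
  filter_upwards [e, hz'] with ω e hz'
  rw [e, Finset.sum_apply, Finset.sum_product]
  refine Finset.sum_congr rfl fun i hi => ?_
  rw [Finset.sum_eq_single i]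
  · exact fun l hl hli => hz' (i, l) hi hl hli.symm
  · exact fun h => absurd hi h

end Conditional

/-! ### The Lindeberg telescope -/

section Telescope
variable {d : ℕ} {f : (Fin d → ℝ) → ℝ} {f' : (Fin d → ℝ) → Fin d → ℝ}
  {f'' : (Fin d → ℝ) → Fin d → Fin d → ℝ} {B K2 K3 : ℝ}
  {Ω : Type*} {m0 : MeasurableSpace Ω} {μ : Measure Ω} [IsProbabilityMeasure μ]

/-- **Lindeberg telescoping**: comparison of the conditional expectation of a test function of the
martingale with its expectation under the Gaussian law of the same conditional covariance. -/
lemma IsTest.compare (h : IsTest f f' f'' B K2 K3) (hK3 : 0 ≤ K3) {n : ℕ}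
    {F : ℕ → MeasurableSpace Ω} {X : ℕ → Ω → Fin d → ℝ} (hF : Monotone F) (hF0 : ∀ k, F k ≤ m0)
    (hX : ∀ i ∈ Finset.Icc 1 n, Measurable[F i] (X i))
    (hX0 : ∀ i ∈ Finset.Icc 1 n, ∀ j, μ[fun ω => X i ω j | F (i - 1)] =ᵐ[μ] 0)
    (i3 : ∀ i ∈ Finset.Icc 1 n, Integrable (fun ω => ‖X i ω‖ ^ 3) μ)
    {Q : ℕ → Ω → Matrix (Fin d) (Fin d) ℝ}
    (hQm : ∀ i ∈ Finset.Icc 1 n, ∀ j k, Measurable[F 0] fun ω => Q i ω j k)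
    (hQ : ∀ i ∈ Finset.Icc 1 n, ∀ ω, (Q i ω).PosSemidef)
    (hQX : ∀ i ∈ Finset.Icc 1 n, ∀ j k,
      (fun ω => Q i ω j k) =ᵐ[μ] μ[fun ω => X i ω j * X i ω k | F 0])
    {c : ℕ → Ω → ℝ} (hc : ∀ i ∈ Finset.Icc 1 n, Measurable[F 0] (c i))
    (h3 : ∀ i ∈ Finset.Icc 1 n, ∀ ω, Integrable (fun w => ‖w‖ ^ 3) (gaussN (Q i ω)) ∧
      ∫ w, ‖w‖ ^ 3 ∂(gaussN (Q i ω)) ≤ c i ω) :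
    ∀ᵐ ω ∂μ, |μ[fun ω => f (∑ i ∈ Finset.Icc 1 n, X i ω) | F 0] ω -
        ∫ w, f w ∂(gaussN (∑ i ∈ Finset.Icc 1 n, Q i ω))| ≤
      ∑ i ∈ Finset.Icc 1 n, (K2 * μ[fun ω => ∑ j, ∑ k,
          |μ[fun ω => X i ω j * X i ω k | F (i - 1)] ω - Q i ω j k| | F 0] ω +
        K3 * (μ[fun ω => ‖X i ω‖ ^ 3 | F 0] ω + c i ω)) := by
  have hXm : ∀ i ∈ Finset.Icc 1 n, Measurable[m0] (X i) := fun i hi => (hX i hi).mono (hF0 i) le_rfl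
  have hRm : ∀ s ⊆ Finset.Icc 1 n, ∀ j k, Measurable[F 0] fun ω => (∑ i ∈ s, Q i ω) j k := by
    intro s hs j k
    simp only [Matrix.sum_apply]
    exact Finset.measurable_sum _ fun i hi => hQm i (hs hi) j k
  -- the first `i` increments are those of the martingale, the remaining ones are Gaussian
  set A : ℕ → Ω → ℝ := fun i => μ[fun ω => ∫ w, f ((∑ l ∈ Finset.Icc 1 i, X l ω) + w)
    ∂(gaussN (∑ l ∈ Finset.Ioc i n, Q l ω)) | F 0] with hA
  set b : ℕ → Ω → ℝ := fun i ω => K2 * μ[fun ω => ∑ j, ∑ k,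
          |μ[fun ω => X i ω j * X i ω k | F (i - 1)] ω - Q i ω j k| | F 0] ω +
        K3 * (μ[fun ω => ‖X i ω‖ ^ 3 | F 0] ω + c i ω) with hb
  have step : ∀ i, i < n → ∀ᵐ ω ∂μ, |A (i + 1) ω - A i ω| ≤ b (i + 1) ω := by
    intro i hi
    have hi1 : i + 1 ∈ Finset.Icc 1 n := by simp; omega
    have hsub : Finset.Ioc (i + 1) n ⊆ Finset.Icc 1 n := by
      intro l hl; simp at hl ⊢; omega
    have hSm : Measurable[F i] fun ω => ∑ l ∈ Finset.Icc 1 i, X l ω :=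
      Finset.measurable_sum _ fun l hl => by
        simp only [Finset.mem_Icc] at hl
        exact (hX l (by simp; omega)).mono (hF hl.2) le_rfl
    have := h.step hK3 (hF (Nat.zero_le i)) (hF0 i) hSm (hXm _ hi1)
      (P := fun ω => ∑ l ∈ Finset.Ioc (i + 1) n, Q l ω) (Q := Q (i + 1)) (hRm _ hsub) (hQm _ hi1)
      (fun ω => Matrix.posSemidef_sum _ fun l hl => hQ l (hsub hl) ω) (hQ _ hi1)
      (fun j => integrable_coord (hXm _ hi1) (i3 _ hi1) j)
      (fun j k => integrable_mul_of_sq ((measurable_pi_apply j).comp (hXm _ hi1))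
        ((measurable_pi_apply k).comp (hXm _ hi1)) (integrable_sq_coord (hXm _ hi1) (i3 _ hi1) j)
        (integrable_sq_coord (hXm _ hi1) (i3 _ hi1) k))
      (i3 _ hi1) (hX0 _ hi1) (hQX _ hi1) (hc _ hi1) (h3 _ hi1)
    have e1 : Finset.Ioc i n = insert (i + 1) (Finset.Ioc (i + 1) n) := by
      ext l; simp; omega
    have e2 : ∀ ω, ∑ l ∈ Finset.Ioc i n, Q l ω =
        ∑ l ∈ Finset.Ioc (i + 1) n, Q l ω + Q (i + 1) ω := by
      intro ω
      rw [e1, Finset.sum_insert (by simp), add_comm]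
    have e3 : ∀ ω, ∑ l ∈ Finset.Icc 1 (i + 1), X l ω = ∑ l ∈ Finset.Icc 1 i, X l ω + X (i + 1) ω :=
      fun ω => Finset.sum_Icc_succ_top (by omega) _
    simp only [hA, hb, e2, e3, Nat.add_sub_cancel]
    exact this
  have tel : ∀ i, i ≤ n → ∀ᵐ ω ∂μ, |A i ω - A 0 ω| ≤ ∑ l ∈ Finset.Icc 1 i, b l ω := by
    intro i
    induction i with
    | zero => intro _; simp
    | succ i ih =>
      intro hi
      filter_upwards [ih (by omega), step i (by omega)] with ω h1 h2
      rw [Finset.sum_Icc_succ_top (by omega)]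
      have := abs_sub_le (A (i + 1) ω) (A i ω) (A 0 ω)
      linarith
  have eA : A 0 = fun ω => ∫ w, f w ∂(gaussN (∑ i ∈ Finset.Icc 1 n, Q i ω)) := by
    have e0 : Finset.Ioc 0 n = Finset.Icc 1 n := by ext l; simp; omega
    simp only [hA, e0]
    have e1 : (fun ω => ∫ w, f ((∑ l ∈ Finset.Icc 1 0, X l ω) + w)
        ∂(gaussN (∑ l ∈ Finset.Icc 1 n, Q l ω))) =
        fun ω => ∫ w, f w ∂(gaussN (∑ i ∈ Finset.Icc 1 n, Q i ω)) := by
      simp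
    have hm := measurable_integral_gaussN (m := F 0) (P := fun ω => ∑ i ∈ Finset.Icc 1 n, Q i ω)
      (hRm _ subset_rfl) (S := fun _ => 0) measurable_const h.c0.measurable
    simp only [zero_add] at hm
    rw [e1]
    refine condExp_of_stronglyMeasurable (hF0 0) hm ?_
    refine Integrable.of_bound (hm.mono (hF0 0)).aestronglyMeasurable 1 (ae_of_all _ fun ω => ?_)
    have := abs_integral_shift_le (gaussN (∑ i ∈ Finset.Icc 1 n, Q i ω)) h.b0 0
    simpa using this
  have eN : A n = μ[fun ω => f (∑ i ∈ Finset.Icc 1 n, X i ω) | F 0] := by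
    simp only [hA, Finset.Ioc_self, Finset.sum_empty, gaussN_zero]
    simp
  have := tel n le_rfl
  rw [eA, eN] at this
  exact this

end Telescope

/-! ### Choice of the smoothing level, and bracketing of distribution functions -/

section Deterministic

/-- Choice of the smoothing level. With `a⁴ = G`, `w⁴ = v`, `p² = l^α`, `s² = l`, any level `q`
between `D` and `2D`, `D = a w s / p`, makes all three contributions at most a constant times the
right-hand side. -/
lemma optimise {K A l L G β v τ α Δ : ℝ} (hK : 0 ≤ K) (hA : 0 ≤ A) (hl : 1 / 2 ≤ l) (hL : l ≤ L)
    (hG : 0 < G) (hβ : 0 ≤ β) (hv : 0 < v) (hτ : 1 ≤ τ) (hα0 : 0 ≤ α) (hα : α ≤ 1 / 4)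
    (h : ∀ q : ℚ, 0 < (q : ℝ) →
      Δ ≤ K * (l / (q : ℝ) ^ 2) * β + K * (l ^ 2 / (q : ℝ) ^ 3) * G + A * (q / v * √l)) :
    Δ ≤ 2 * (K + A) * (l ^ α * (β / v ^ 2) * √(τ / (G / v ^ 3)) +
      L ^ (1 - α / 2) * (τ ^ 3 * (G / v ^ 3)) ^ ((1 : ℝ) / 4)) := by
  have hl0 : 0 < l := by linarith
  have root : ∀ x : ℝ, 0 < x → ∃ a, 0 < a ∧ a ^ 4 = x := fun x hx =>
    ⟨x ^ ((1 : ℝ) / 4), by positivity, by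
      rw [← Real.rpow_natCast, ← Real.rpow_mul hx.le]; norm_num⟩
  obtain ⟨a, ha, rfl⟩ := root G hG
  obtain ⟨w, hw, rfl⟩ := root v hv
  set s := √l with hs
  have hs0 : 0 < s := Real.sqrt_pos.2 hl0
  have hsl : l = s ^ 2 := (Real.sq_sqrt hl0.le).symm
  set p := l ^ (α / 2) with hp
  have hp0 : 0 < p := by positivity
  have hp2 : l ^ α = p ^ 2 := by
    rw [hp, ← Real.rpow_natCast, ← Real.rpow_mul hl0.le]; congr 1; push_cast; ring
  have hp4 : p ^ 4 ≤ 2 * s := by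
    have e : p ^ 4 = l ^ (2 * α) := by
      rw [hp, ← Real.rpow_natCast, ← Real.rpow_mul hl0.le]; congr 1; push_cast; ring
    rw [e]
    rcases le_total 1 l with h1 | h1
    · have : l ^ (2 * α) ≤ l ^ ((1 : ℝ) / 2) := Real.rpow_le_rpow_of_exponent_le h1 (by linarith)
      rw [← Real.sqrt_eq_rpow] at this
      linarith
    · have := Real.rpow_le_one hl0.le h1 (by linarith : 0 ≤ 2 * α)
      nlinarith
  have t1 : β * p ^ 2 / (a ^ 2 * w ^ 2) ≤
      l ^ α * (β / (w ^ 4) ^ 2) * √(τ / (a ^ 4 / (w ^ 4) ^ 3)) := by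
    have : w ^ 6 / a ^ 2 ≤ √(τ / (a ^ 4 / (w ^ 4) ^ 3)) := by
      apply Real.le_sqrt_of_sq_le
      have e : τ / (a ^ 4 / (w ^ 4) ^ 3) = τ * (w ^ 6 / a ^ 2) ^ 2 := by field_simp
      rw [e]
      nlinarith [sq_nonneg (w ^ 6 / a ^ 2)]
    rw [hp2]
    refine le_trans (le_of_eq ?_) (mul_le_mul_of_nonneg_left this (by positivity))
    field_simp
  have t2 : s ^ 2 / p * (a / w ^ 3) ≤
      L ^ (1 - α / 2) * (τ ^ 3 * (a ^ 4 / (w ^ 4) ^ 3)) ^ ((1 : ℝ) / 4) := by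
    have h1 : s ^ 2 / p ≤ L ^ (1 - α / 2) := by
      have : l ^ (1 - α / 2) ≤ L ^ (1 - α / 2) := Real.rpow_le_rpow hl0.le hL (by linarith)
      rw [Real.rpow_sub hl0, Real.rpow_one] at this
      rw [← hsl]; exact this
    have h2 : a / w ^ 3 ≤ (τ ^ 3 * (a ^ 4 / (w ^ 4) ^ 3)) ^ ((1 : ℝ) / 4) := by
      have e : a / w ^ 3 = ((a / w ^ 3) ^ 4) ^ ((1 : ℝ) / 4) := by
        rw [← Real.rpow_natCast (a / w ^ 3) 4, ← Real.rpow_mul (by positivity)]; norm_num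
      rw [e]
      refine Real.rpow_le_rpow (by positivity) ?_ (by norm_num)
      have e2 : a ^ 4 / (w ^ 4) ^ 3 = (a / w ^ 3) ^ 4 := by field_simp
      rw [e2]
      have : 1 ≤ τ ^ 3 := one_le_pow₀ hτ
      nlinarith [pow_pos (div_pos ha (pow_pos hw 3)) 4]
    exact mul_le_mul h1 h2 (by positivity) (le_trans (by positivity) h1)
  set T1 := l ^ α * (β / (w ^ 4) ^ 2) * √(τ / (a ^ 4 / (w ^ 4) ^ 3))
  set T2 := L ^ (1 - α / 2) * (τ ^ 3 * (a ^ 4 / (w ^ 4) ^ 3)) ^ ((1 : ℝ) / 4)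
  set D := a * w * s / p with hD
  have hD0 : 0 < D := by positivity
  obtain ⟨q, hq1, hq2⟩ := exists_rat_btwn (by linarith : D < 2 * D)
  have hq0 : (0 : ℝ) < q := hD0.trans hq1
  refine (h q hq0).trans ?_
  have b1 : l / (q : ℝ) ^ 2 * β ≤ T1 := by
    refine le_trans ?_ t1
    have : l / (q : ℝ) ^ 2 ≤ l / D ^ 2 := by gcongr
    refine (mul_le_mul_of_nonneg_right this hβ).trans (le_of_eq ?_)
    rw [hD, hsl]
    field_simp
  have b2 : l ^ 2 / (q : ℝ) ^ 3 * a ^ 4 ≤ 2 * T2 := by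
    have h1 : l ^ 2 / (q : ℝ) ^ 3 * a ^ 4 ≤ l ^ 2 / D ^ 3 * a ^ 4 := by gcongr
    have h2 : l ^ 2 / D ^ 3 * a ^ 4 = p ^ 4 * (s * a / (p * w ^ 3)) := by
      rw [hD, hsl]
      field_simp
    have h3 : p ^ 4 * (s * a / (p * w ^ 3)) ≤ 2 * s * (s * a / (p * w ^ 3)) := by gcongr
    have h4 : 2 * s * (s * a / (p * w ^ 3)) = 2 * (s ^ 2 / p * (a / w ^ 3)) := by
      field_simp
    linarith
  have b3 : q / w ^ 4 * s ≤ 2 * T2 := by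
    have h1 : q / w ^ 4 * s ≤ 2 * D / w ^ 4 * s := by gcongr
    have h2 : 2 * D / w ^ 4 * s = 2 * (s ^ 2 / p * (a / w ^ 3)) := by
      rw [hD]; field_simp
    linarith
  have hT1 : 0 ≤ T1 := le_trans (by positivity) t1
  have c1 := mul_le_mul_of_nonneg_left b1 hK
  have c2 := mul_le_mul_of_nonneg_left b2 hK
  have c3 := mul_le_mul_of_nonneg_left b3 hA
  have d1 := mul_nonneg hK hT1
  have d2 := mul_nonneg hA hT1
  linarith

/-- For right-continuous functions, a bound on the difference at the rationals holds everywhere. -/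
lemma abs_sub_le_of_rat {g₁ g₂ : ℝ → ℝ} (h₁ : ∀ r, ContinuousWithinAt g₁ (Set.Ici r) r)
    (h₂ : ∀ r, ContinuousWithinAt g₂ (Set.Ici r) r) {Δ : ℝ} (h : ∀ q : ℚ, |g₁ q - g₂ q| ≤ Δ)
    (r : ℝ) : |g₁ r - g₂ r| ≤ Δ := by
  by_contra! hr
  have hc : ContinuousWithinAt (fun x => |g₁ x - g₂ x|) (Set.Ici r) r := ((h₁ r).sub (h₂ r)).abs
  have := hc.eventually (lt_mem_nhds hr)
  obtain ⟨u, hu, hu'⟩ := mem_nhdsGE_iff_exists_Ico_subset.1 this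
  obtain ⟨q, hq1, hq2⟩ := exists_rat_btwn (show r < u from hu)
  exact absurd (h q) (not_le.2 (hu' ⟨hq1.le, hq2⟩))

end Deterministic

section Bracket
variable {d : ℕ}

lemma measurableSet_orthant (r : ℝ) : MeasurableSet {w : Fin d → ℝ | ∀ j, w j ≤ r} := by
  have : {w : Fin d → ℝ | ∀ j, w j ≤ r} = ⋂ j, {w | w j ≤ r} := by ext; simp
  rw [this]
  exact MeasurableSet.iInter fun j => measurableSet_le (measurable_pi_apply j) measurable_const

/-- The integral of a function between the indicators of `{max ≤ r}` and `{max < r'}` lies between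
the corresponding values of the distribution function of the maximum. -/
lemma gauss_bracket (ν : Measure (Fin d → ℝ)) [IsProbabilityMeasure ν] {f : (Fin d → ℝ) → ℝ}
    (hc : Continuous f) (h01 : ∀ x, 0 ≤ f x ∧ f x ≤ 1) {r r' : ℝ}
    (h1 : ∀ x, (∀ j, x j ≤ r) → f x = 1) (h0 : ∀ x, (∃ j, r' ≤ x j) → f x = 0) :
    ν.real {w | ∀ j, w j ≤ r} ≤ ∫ w, f w ∂ν ∧ ∫ w, f w ∂ν ≤ ν.real {w | ∀ j, w j ≤ r'} := by
  have hi : Integrable f ν := Integrable.of_bound hc.aestronglyMeasurable 1 (ae_of_all _ fun x => by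
    rw [Real.norm_eq_abs, abs_of_nonneg (h01 x).1]; exact (h01 x).2)
  have ii : ∀ r, Integrable ({w : Fin d → ℝ | ∀ j, w j ≤ r}.indicator fun _ => (1 : ℝ)) ν :=
    fun r => (integrable_const _).indicator (measurableSet_orthant r)
  have e : ∀ r, ν.real {w : Fin d → ℝ | ∀ j, w j ≤ r} =
      ∫ w, {w : Fin d → ℝ | ∀ j, w j ≤ r}.indicator (fun _ => (1 : ℝ)) w ∂ν := fun r =>
    (integral_indicator_one (measurableSet_orthant r)).symm
  rw [e, e]
  refine ⟨integral_mono (ii r) hi fun w => ?_, integral_mono hi (ii r') fun w => ?_⟩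
  · by_cases hw : ∀ j, w j ≤ r
    · rw [Set.indicator_of_mem (by exact hw), h1 w hw]
    · rw [Set.indicator_of_notMem (by exact hw)]; exact (h01 w).1
  · by_cases hw : ∀ j, w j ≤ r'
    · rw [Set.indicator_of_mem (by exact hw)]; exact (h01 w).2
    · rw [Set.indicator_of_notMem (by exact hw)]
      push Not at hw
      exact (h0 w (hw.imp fun j hj => hj.le)).le

variable {Ω : Type*} {m0 : MeasurableSpace Ω} {μ : Measure Ω} [IsProbabilityMeasure μ]

/-- The conditional counterpart of `gauss_bracket`. -/
lemma condExp_bracket {m : MeasurableSpace Ω} {Y : Ω → Fin d → ℝ} (hY : Measurable[m0] Y)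
    {f : (Fin d → ℝ) → ℝ}
    (hc : Continuous f) (h01 : ∀ x, 0 ≤ f x ∧ f x ≤ 1) {r r' : ℝ}
    (h1 : ∀ x, (∀ j, x j ≤ r) → f x = 1) (h0 : ∀ x, (∃ j, r' ≤ x j) → f x = 0) :
    ∀ᵐ ω ∂μ, μ[(Y ⁻¹' {w | ∀ j, w j ≤ r}).indicator fun _ => (1 : ℝ) | m] ω ≤
        μ[fun ω => f (Y ω) | m] ω ∧
      μ[fun ω => f (Y ω) | m] ω ≤
        μ[(Y ⁻¹' {w | ∀ j, w j ≤ r'}).indicator fun _ => (1 : ℝ) | m] ω := by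
  have hi : Integrable (fun ω => f (Y ω)) μ :=
    Integrable.of_bound (hc.measurable.comp hY).aestronglyMeasurable 1 (ae_of_all _ fun x => by
      rw [Real.norm_eq_abs, abs_of_nonneg (h01 _).1]; exact (h01 _).2)
  have ii : ∀ r, Integrable ((Y ⁻¹' {w : Fin d → ℝ | ∀ j, w j ≤ r}).indicator fun _ => (1 : ℝ)) μ :=
    fun r => (integrable_const _).indicator (hY (measurableSet_orthant r))
  have a1 := condExp_mono (m := m) (ii r) hi (ae_of_all _ fun ω => by
    by_cases hw : ∀ j, Y ω j ≤ r
    · rw [Set.indicator_of_mem (by exact hw)]; exact (h1 _ hw).ge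
    · rw [Set.indicator_of_notMem (by exact hw)]; exact (h01 _).1)
  have a2 := condExp_mono (m := m) hi (ii r') (ae_of_all _ fun ω => by
    by_cases hw : ∀ j, Y ω j ≤ r'
    · rw [Set.indicator_of_mem (by exact hw)]; exact (h01 _).2
    · rw [Set.indicator_of_notMem (by exact hw)]
      push Not at hw
      exact (h0 _ (hw.imp fun j hj => hj.le)).le)
  filter_upwards [a1, a2] with ω b1 b2 using ⟨b1, b2⟩

/-- The conditional distribution functions of the maximum of the martingale and of the matching
Gaussian mixture interlace, up to a shift by `2q` and the Lindeberg error at smoothing level `q`. -/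
lemma cdf_interlace : ∃ K : ℝ, 0 < K ∧ ∀ (d n : ℕ), 1 < d →
    ∀ (Ω : Type) (m0 : MeasurableSpace Ω) (μ : Measure Ω) [IsProbabilityMeasure μ]
    (F : ℕ → MeasurableSpace Ω) (X : ℕ → Ω → Fin d → ℝ)
    (Q : ℕ → Ω → Matrix (Fin d) (Fin d) ℝ), Monotone F → (∀ k, F k ≤ m0) →
    (∀ i ∈ Finset.Icc 1 n, Measurable[F i] (X i)) →
    (∀ i ∈ Finset.Icc 1 n, ∀ j, μ[fun ω => X i ω j | F (i - 1)] =ᵐ[μ] 0) →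
    (∀ i ∈ Finset.Icc 1 n, Integrable (fun ω => ‖X i ω‖ ^ 3) μ) →
    (∀ i ∈ Finset.Icc 1 n, ∀ j k, Measurable[F 0] fun ω => Q i ω j k) →
    (∀ i ∈ Finset.Icc 1 n, ∀ ω, (Q i ω).PosSemidef) →
    (∀ i ∈ Finset.Icc 1 n, ∀ j k,
      (fun ω => Q i ω j k) =ᵐ[μ] μ[fun ω => X i ω j * X i ω k | F 0]) →
    ∀ᵐ ω ∂μ, ∀ q r : ℚ, 0 < (q : ℝ) →
      ∃ E : ℝ, E = K * (Real.log d / (q : ℝ) ^ 2) * (∑ i ∈ Finset.Icc 1 n, μ[fun ω => ∑ j, ∑ k,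
          |μ[fun ω => X i ω j * X i ω k | F (i - 1)] ω - Q i ω j k| | F 0] ω) +
        K * (Real.log d ^ 2 / (q : ℝ) ^ 3) * (∑ i ∈ Finset.Icc 1 n,
          (μ[fun ω => ‖X i ω‖ ^ 3 | F 0] ω +
            ((⨆ j, Q i ω j j) * lnPlus d) ^ ((3 : ℝ) / 2))) ∧
      μ[((fun ω => ∑ i ∈ Finset.Icc 1 n, X i ω) ⁻¹' {w | ∀ j, w j ≤ (r : ℝ)}).indicator
          fun _ => (1 : ℝ) | F 0] ω ≤
        (gaussN (∑ i ∈ Finset.Icc 1 n, Q i ω)).real {w | ∀ j, w j ≤ (r : ℝ) + 2 * q} + E ∧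
      (gaussN (∑ i ∈ Finset.Icc 1 n, Q i ω)).real {w | ∀ j, w j ≤ (r : ℝ)} - E ≤
        μ[((fun ω => ∑ i ∈ Finset.Icc 1 n, X i ω) ⁻¹' {w | ∀ j, w j ≤ (r : ℝ) + 2 * q}).indicator
          fun _ => (1 : ℝ) | F 0] ω := by
  obtain ⟨K, hK, test⟩ := exists_test
  obtain ⟨Cg, hCg, third⟩ := gaussN_third
  refine ⟨K * (1 + Cg), by positivity, ?_⟩
  intro d n hd Ω m0 μ _ F X Q hF hF0 hX hX0 i3 hQm hQ hQX
  have : Nonempty (Fin d) := ⟨⟨0, by omega⟩⟩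
  have hlog : 0 < Real.log d := Real.log_pos (by exact_mod_cast hd)
  have hSm : Measurable[m0] fun ω => ∑ i ∈ Finset.Icc 1 n, X i ω :=
    Finset.measurable_sum _ fun i hi => (hX i hi).mono (hF0 i) le_rfl
  set g : ℕ → Ω → ℝ := fun i ω => ((⨆ j, Q i ω j j) * lnPlus d) ^ ((3 : ℝ) / 2) with hg
  have hg0 : ∀ i ∈ Finset.Icc 1 n, ∀ ω, 0 ≤ g i ω := fun i hi ω =>
    Real.rpow_nonneg (mul_nonneg (Real.iSup_nonneg fun j => (hQ i hi ω).diag_nonneg)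
      (le_max_of_le_left zero_le_one)) _
  have hgm : ∀ i ∈ Finset.Icc 1 n, Measurable[F 0] fun ω => Cg * g i ω := by
    intro i hi
    refine Measurable.const_mul ?_ Cg
    refine Measurable.pow_const ?_ _
    exact (Measurable.iSup fun j => hQm i hi j j).mul_const _
  have h3 : ∀ i ∈ Finset.Icc 1 n, ∀ ω, Integrable (fun w => ‖w‖ ^ 3) (gaussN (Q i ω)) ∧
      ∫ w, ‖w‖ ^ 3 ∂(gaussN (Q i ω)) ≤ Cg * g i ω := fun i hi ω =>
    third d hd (Q i ω) (hQ i hi ω) (⨆ j, Q i ω j j) (lnPlus d)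
      (Real.iSup_nonneg fun j => (hQ i hi ω).diag_nonneg) (le_max_left _ _) (le_max_right _ _)
      fun j => le_ciSup (f := fun j => Q i ω j j) (Set.finite_range _).bddAbove j
  set b : ℕ → Ω → ℝ := fun i => μ[fun ω => ∑ j, ∑ k,
    |μ[fun ω => X i ω j * X i ω k | F (i - 1)] ω - Q i ω j k| | F 0] with hb
  set x : ℕ → Ω → ℝ := fun i => μ[fun ω => ‖X i ω‖ ^ 3 | F 0] with hx
  have hb0 : ∀ᵐ ω ∂μ, ∀ i, 0 ≤ b i ω := ae_all_iff.2 fun i =>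
    condExp_nonneg (ae_of_all _ fun ω =>
      Finset.sum_nonneg fun j _ => Finset.sum_nonneg fun k _ => abs_nonneg _)
  have hx0 : ∀ᵐ ω ∂μ, ∀ i, 0 ≤ x i ω := ae_all_iff.2 fun i =>
    condExp_nonneg (ae_of_all _ fun ω => by positivity)
  refine ae_all_iff.2 fun q => ae_all_iff.2 fun r => ?_
  by_cases hq : 0 < (q : ℝ)
  swap
  · exact ae_of_all _ fun ω h => absurd h hq
  obtain ⟨f, f', f'', c0, c1, c2, h01, hf1, hf0, ⟨B, b1⟩, b2, tay⟩ := test d hd q hq r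
  have T : IsTest f f' f'' B (K * (Real.log d / (q : ℝ) ^ 2)) (K * (Real.log d ^ 2 / (q : ℝ) ^ 3)) :=
    ⟨c0, c1, c2, fun y => by rw [abs_of_nonneg (h01 y).1]; exact (h01 y).2, b1, b2, tay⟩
  have cmp := T.compare (by positivity) hF hF0 hX hX0 i3 hQm hQ hQX hgm h3
  have br := condExp_bracket (m := F 0) (μ := μ) hSm c0 h01 hf1 hf0
  filter_upwards [cmp, br, hb0, hx0] with ω cmp br hb0 hx0 _
  obtain ⟨g1, g2⟩ := gauss_bracket (gaussN (∑ i ∈ Finset.Icc 1 n, Q i ω)) c0 h01 hf1 hf0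
  refine ⟨_, rfl, ?_⟩
  have le : ∑ i ∈ Finset.Icc 1 n, (K * (Real.log d / (q : ℝ) ^ 2) * b i ω +
      K * (Real.log d ^ 2 / (q : ℝ) ^ 3) * (x i ω + Cg * g i ω)) ≤
      K * (1 + Cg) * (Real.log d / (q : ℝ) ^ 2) * (∑ i ∈ Finset.Icc 1 n, b i ω) +
      K * (1 + Cg) * (Real.log d ^ 2 / (q : ℝ) ^ 3) * (∑ i ∈ Finset.Icc 1 n, (x i ω + g i ω)) := by
    rw [Finset.mul_sum, Finset.mul_sum, ← Finset.sum_add_distrib]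
    refine Finset.sum_le_sum fun i hi => ?_
    have e1 : 0 ≤ K * (Real.log d / (q : ℝ) ^ 2) * b i ω := mul_nonneg (by positivity) (hb0 i)
    have e2 : 0 ≤ K * (Real.log d ^ 2 / (q : ℝ) ^ 3) * x i ω := mul_nonneg (by positivity) (hx0 i)
    have e3 : 0 ≤ K * (Real.log d ^ 2 / (q : ℝ) ^ 3) * g i ω :=
      mul_nonneg (by positivity) (hg0 i hi ω)
    nlinarith [mul_nonneg hCg.le e1, mul_nonneg hCg.le e2, mul_nonneg hCg.le e3]
  have cmp' := abs_le.1 (cmp.trans le)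
  exact ⟨by linarith [cmp'.2, br.1], by linarith [cmp'.1, br.2]⟩

end Bracket
end MaxMart

/-- **Conditional Berry–Esseen bound for maxima of vector-valued martingales.**
There is a universal constant `C > 0` such that for every `ℝ^d`-valued (`d > 1`)
martingale difference sequence `{X_i}_{i=1}^n` adapted to `{F_i}` with `E[X_1|F_0]=0`
and finite conditional third moments, `S = Σ_{i≤n} X_i`, `V` a version of
`E[S Sᵀ | F_0]` with `v̲² = min_j [V]_{jj} > 0` a.s., `T` conditionally `N(0,V)` given
`F_0`, and regular conditional cdfs `FS`, `FT` of `M(S)`, `M(T)` given `F_0`: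
for every `α ∈ [0, 1/4]`, almost surely,
`ρ(M(S), M(T) | F_0) ≤ C[(ln d)^α β' √(τ/Γ') + (ln(dn))^{1−α/2} (τ³Γ')^{1/4}]`. -/
theorem stmt_15 :
    ∃ C : ℝ, 0 < C ∧
    ∀ (d n : ℕ), 1 < d → 0 < n →
    ∀ (Ω : Type) [m0 : MeasurableSpace Ω] (μ : Measure Ω) [IsProbabilityMeasure μ]
      (F : ℕ → MeasurableSpace Ω) (X : ℕ → Ω → Fin d → ℝ)
      (Sigm : ℕ → Ω → Fin d → Fin d → ℝ)
      (V : Ω → Fin d → Fin d → ℝ) (T : Ω → Fin d → ℝ) (FS FT : Ω → ℝ → ℝ),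
      Monotone F → (∀ k, F k ≤ m0) →
      (∀ i ∈ Finset.Icc 1 n, Measurable[F i] (X i)) →
      (∀ i ∈ Finset.Icc 1 n, ∀ j, μ[fun ω => X i ω j | F (i - 1)] =ᵐ[μ] 0) →
      (∀ i ∈ Finset.Icc 1 n, Integrable (fun ω => ‖X i ω‖ ^ 3) μ) →
      (∀ i ∈ Finset.Icc 1 n, ∀ j k,
        (fun ω => Sigm i ω j k) =ᵐ[μ] μ[fun ω => X i ω j * X i ω k | F 0]) →
      (∀ j k, (fun ω => V ω j k) =ᵐ[μ]
        μ[fun ω => (∑ i ∈ Finset.Icc 1 n, X i ω j) * (∑ i ∈ Finset.Icc 1 n, X i ω k)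
          | F 0]) →
      Measurable T →
      (∀ t : Fin d → ℝ,
        μ[fun ω => Complex.exp (Complex.I * ((∑ j, t j * T ω j : ℝ) : ℂ)) | F 0]
          =ᵐ[μ] fun ω =>
            Complex.exp (((-(1 / 2) * ∑ j, ∑ k, t j * V ω j k * t k : ℝ) : ℂ))) →
      -- `v̲ > 0` a.s.
      (∀ᵐ ω ∂μ, 0 < ⨅ j, V ω j j) →
      -- `FS` is a regular conditional cdf of `M(S)` given `F 0`
      (∀ r : ℝ, (fun ω => FS ω r) =ᵐ[μ]
        μ[Set.indicator {ω | (⨆ j, ∑ i ∈ Finset.Icc 1 n, X i ω j) ≤ r}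
            (fun _ => (1 : ℝ)) | F 0]) →
      (∀ ω, Monotone (FS ω)) →
      (∀ ω r, ContinuousWithinAt (FS ω) (Set.Ici r) r) →
      (∀ ω, Filter.Tendsto (FS ω) Filter.atTop (nhds 1)) →
      (∀ ω, Filter.Tendsto (FS ω) Filter.atBot (nhds 0)) →
      -- `FT` is a regular conditional cdf of `M(T)` given `F 0`
      (∀ r : ℝ, (fun ω => FT ω r) =ᵐ[μ]
        μ[Set.indicator {ω | (⨆ j, T ω j) ≤ r} (fun _ => (1 : ℝ)) | F 0]) →
      (∀ ω, Monotone (FT ω)) →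
      (∀ ω r, ContinuousWithinAt (FT ω) (Set.Ici r) r) →
      (∀ ω, Filter.Tendsto (FT ω) Filter.atTop (nhds 1)) →
      (∀ ω, Filter.Tendsto (FT ω) Filter.atBot (nhds 0)) →
      ∀ α : ℝ, 0 ≤ α → α ≤ 1 / 4 →
      ∀ᵐ ω ∂μ,
        (⨆ r : ℝ, |FS ω r - FT ω r|) ≤
          C * (Real.log d ^ α *
                ((∑ i ∈ Finset.Icc 1 n,
                    (μ[fun ω' => ∑ j, ∑ k,
                        |(μ[fun ω'' => X i ω'' j * X i ω'' k | F (i - 1)]) ω' -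
                          Sigm i ω' j k| | F 0]) ω) / (⨅ j, V ω j j)) *
                Real.sqrt
                  ((Real.sqrt (⨆ j, V ω j j) / Real.sqrt (⨅ j, V ω j j)) /
                    ((∑ i ∈ Finset.Icc 1 n,
                        ((μ[fun ω' => ‖X i ω'‖ ^ 3 | F 0]) ω +
                          ((⨆ j, Sigm i ω j j) * lnPlus d) ^ ((3 : ℝ) / 2))) /
                      Real.sqrt (⨅ j, V ω j j) ^ 3)) +
              Real.log ((d : ℝ) * n) ^ (1 - α / 2) *
                ((Real.sqrt (⨆ j, V ω j j) / Real.sqrt (⨅ j, V ω j j)) ^ 3 *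
                    ((∑ i ∈ Finset.Icc 1 n,
                        ((μ[fun ω' => ‖X i ω'‖ ^ 3 | F 0]) ω +
                          ((⨆ j, Sigm i ω j j) * lnPlus d) ^ ((3 : ℝ) / 2))) /
                      Real.sqrt (⨅ j, V ω j j) ^ 3)) ^ ((1 : ℝ) / 4)) := by
  obtain ⟨K, hK, interlace⟩ := MaxMart.cdf_interlace
  obtain ⟨A, hA, anti⟩ := MaxMart.anticoncentration
  refine ⟨2 * (K + 2 * A), by positivity, ?_⟩
  intro d n hd hn Ω m0 μ _ F X Sigm V T FS FT hF hF0 hX hX0 i3 hSig hV hT hcf hpos hFS _ hFSc _ _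
    hFT _ hFTc _ _ α hα0 hα
  have : Nonempty (Fin d) := ⟨⟨0, by omega⟩⟩
  have hXm : ∀ i ∈ Finset.Icc 1 n, Measurable[m0] (X i) := fun i hi => (hX i hi).mono (hF0 i) le_rfl
  -- everywhere positive semidefinite versions of the conditional covariances
  have exQ : ∀ i, ∃ Q : Ω → Matrix (Fin d) (Fin d) ℝ, i ∈ Finset.Icc 1 n →
      (∀ j k, Measurable[F 0] fun ω => Q ω j k) ∧ (∀ ω, (Q ω).PosSemidef) ∧
      ∀ j k, (fun ω => Q ω j k) =ᵐ[μ] μ[fun ω => X i ω j * X i ω k | F 0] := by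
    intro i
    by_cases hi : i ∈ Finset.Icc 1 n
    · obtain ⟨Q, hQ⟩ := MaxMart.exists_condCov (m := F 0) (μ := μ) (X := X i) fun j k =>
        MaxMart.integrable_mul_of_sq ((measurable_pi_apply j).comp (hXm i hi))
          ((measurable_pi_apply k).comp (hXm i hi))
          (MaxMart.integrable_sq_coord (hXm i hi) (i3 i hi) j)
          (MaxMart.integrable_sq_coord (hXm i hi) (i3 i hi) k)
      exact ⟨Q, fun _ => hQ⟩
    · exact ⟨0, fun h => absurd h hi⟩
  choose Q hQ using exQ
  have hQp : ∀ i ∈ Finset.Icc 1 n, ∀ ω, (Q i ω).PosSemidef := fun i hi => (hQ i hi).2.1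
  set W : Ω → Matrix (Fin d) (Fin d) ℝ := fun ω => ∑ i ∈ Finset.Icc 1 n, Q i ω with hW
  have hWp : ∀ ω, (W ω).PosSemidef := fun ω => Matrix.posSemidef_sum _ fun i hi => hQp i hi ω
  have hVW : ∀ᵐ ω ∂μ, ∀ j k, V ω j k = W ω j k := by
    refine ae_all_iff.2 fun j => ae_all_iff.2 fun k => ?_
    have hq : ∀ᵐ ω ∂μ, ∀ i, i ∈ Finset.Icc 1 n →
        Q i ω j k = μ[fun ω => X i ω j * X i ω k | F 0] ω := by
      refine ae_all_iff.2 fun i => ?_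
      by_cases hi : i ∈ Finset.Icc 1 n
      · filter_upwards [(hQ i hi).2.2 j k] with ω h _ using h
      · exact ae_of_all _ fun ω h => absurd h hi
    filter_upwards [hV j k, MaxMart.condCov_sum hF hF0 hX hX0 i3 j k, hq] with ω h1 h2 h3
    rw [h1, h2, hW]
    simp only [Matrix.sum_apply]
    exact Finset.sum_congr rfl fun i hi => (h3 i hi).symm
  have hSQ : ∀ᵐ ω ∂μ, ∀ i, i ∈ Finset.Icc 1 n → ∀ j k, Sigm i ω j k = Q i ω j k := by
    refine ae_all_iff.2 fun i => ?_
    by_cases hi : i ∈ Finset.Icc 1 n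
    · have : ∀ᵐ ω ∂μ, ∀ j k, Sigm i ω j k = Q i ω j k :=
        ae_all_iff.2 fun j => ae_all_iff.2 fun k => (hSig i hi j k).trans ((hQ i hi).2.2 j k).symm
      filter_upwards [this] with ω h _ using h
    · exact ae_of_all _ fun ω h => absurd h hi
  have hβQ : ∀ᵐ ω ∂μ, ∀ i, i ∈ Finset.Icc 1 n →
      (μ[fun ω' => ∑ j, ∑ k, |(μ[fun ω'' => X i ω'' j * X i ω'' k | F (i - 1)]) ω' -
        Sigm i ω' j k| | F 0]) ω =
      (μ[fun ω' => ∑ j, ∑ k, |(μ[fun ω'' => X i ω'' j * X i ω'' k | F (i - 1)]) ω' -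
        Q i ω' j k| | F 0]) ω := by
    refine ae_all_iff.2 fun i => ?_
    by_cases hi : i ∈ Finset.Icc 1 n
    · have : (fun ω' => ∑ j, ∑ k, |(μ[fun ω'' => X i ω'' j * X i ω'' k | F (i - 1)]) ω' -
          Sigm i ω' j k|) =ᵐ[μ] fun ω' => ∑ j, ∑ k,
            |(μ[fun ω'' => X i ω'' j * X i ω'' k | F (i - 1)]) ω' - Q i ω' j k| := by
        filter_upwards [hSQ] with ω h
        simp only [h i hi]
      filter_upwards [condExp_congr_ae (m := F 0) this] with ω h _ using h
    · exact ae_of_all _ fun ω h => absurd h hi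
  have hmax : ∀ (x : Fin d → ℝ) (r : ℝ), (⨆ j, x j) ≤ r ↔ ∀ j, x j ≤ r := fun x r =>
    ciSup_le_iff (Set.finite_range x).bddAbove
  have hFS' : ∀ᵐ ω ∂μ, ∀ q : ℚ × ℚ, FS ω ((q.1 : ℝ) + 2 * q.2) =
      μ[((fun ω => ∑ i ∈ Finset.Icc 1 n, X i ω) ⁻¹' {w | ∀ j, w j ≤ (q.1 : ℝ) + 2 * q.2}).indicator
          fun _ => (1 : ℝ) | F 0] ω := by
    refine ae_all_iff.2 fun q => ?_
    have e : ((fun ω => ∑ i ∈ Finset.Icc 1 n, X i ω) ⁻¹' {w | ∀ j, w j ≤ (q.1 : ℝ) + 2 * q.2}) =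
        {ω | (⨆ j, ∑ i ∈ Finset.Icc 1 n, X i ω j) ≤ (q.1 : ℝ) + 2 * q.2} := by
      ext ω
      refine Iff.trans ?_ (hmax _ _).symm
      simp
    rw [e]
    exact hFS _
  have hcf' : ∀ t : Fin d → ℝ,
      μ[fun ω => Complex.exp (Complex.I * ((∑ j, t j * T ω j : ℝ) : ℂ)) | F 0] =ᵐ[μ] fun ω =>
        Complex.exp (((-(1 / 2) * ∑ j, ∑ k, t j * W ω j k * t k : ℝ) : ℂ)) := by
    intro t
    filter_upwards [hcf t, hVW] with ω h1 h2
    rw [h1]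
    simp only [h2]
  have hFT' : ∀ᵐ ω ∂μ, ∀ q : ℚ, FT ω q = (MaxMart.gaussN (W ω)).real {w | ∀ j, w j ≤ (q : ℝ)} := by
    refine ae_all_iff.2 fun q => ?_
    have e : T ⁻¹' {w | ∀ j, w j ≤ (q : ℝ)} = {ω | (⨆ j, T ω j) ≤ (q : ℝ)} := by
      ext ω
      exact (hmax _ _).symm
    have := MaxMart.condCdf_gauss (hF0 0) hT hWp hcf' (MaxMart.measurableSet_orthant (q : ℝ))
    rw [e] at this
    exact (hFT q).trans this.symm
  have hx0 : ∀ᵐ ω ∂μ, ∀ i, 0 ≤ μ[fun ω => ‖X i ω‖ ^ 3 | F 0] ω := ae_all_iff.2 fun i =>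
    condExp_nonneg (ae_of_all _ fun ω => by positivity)
  have hb0 : ∀ᵐ ω ∂μ, ∀ i, 0 ≤ (μ[fun ω' => ∑ j, ∑ k,
      |(μ[fun ω'' => X i ω'' j * X i ω'' k | F (i - 1)]) ω' - Q i ω' j k| | F 0]) ω :=
    ae_all_iff.2 fun i => condExp_nonneg (ae_of_all _ fun ω =>
      Finset.sum_nonneg fun j _ => Finset.sum_nonneg fun k _ => abs_nonneg _)
  filter_upwards [interlace d n hd Ω m0 μ F X Q hF hF0 hX hX0 i3 (fun i hi => (hQ i hi).1) hQp
    (fun i hi => (hQ i hi).2.2), hVW, hSQ, hβQ, hFS', hFT', hx0, hb0, hpos]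
    with ω il hVW hSQ hβQ hFS' hFT' hx0 hb0 hpos
  have eΓ : ∑ i ∈ Finset.Icc 1 n, ((μ[fun ω' => ‖X i ω'‖ ^ 3 | F 0]) ω +
      ((⨆ j, Sigm i ω j j) * lnPlus d) ^ ((3 : ℝ) / 2)) =
      ∑ i ∈ Finset.Icc 1 n, ((μ[fun ω' => ‖X i ω'‖ ^ 3 | F 0]) ω +
      ((⨆ j, Q i ω j j) * lnPlus d) ^ ((3 : ℝ) / 2)) :=
    Finset.sum_congr rfl fun i hi => by simp only [hSQ i hi]
  rw [Finset.sum_congr rfl hβQ, eΓ]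
  set G := ∑ i ∈ Finset.Icc 1 n, ((μ[fun ω' => ‖X i ω'‖ ^ 3 | F 0]) ω +
      ((⨆ j, Q i ω j j) * lnPlus d) ^ ((3 : ℝ) / 2)) with hG
  set b := ∑ i ∈ Finset.Icc 1 n, (μ[fun ω' => ∑ j, ∑ k,
      |(μ[fun ω'' => X i ω'' j * X i ω'' k | F (i - 1)]) ω' - Q i ω' j k| | F 0]) ω with hb
  set v := √(⨅ j, V ω j j) with hv
  have hv0 : 0 < v := Real.sqrt_pos.2 hpos
  have hv2 : ⨅ j, V ω j j = v ^ 2 := (Real.sq_sqrt hpos.le).symm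
  have hvV : ∀ j, v ^ 2 ≤ W ω j j := fun j => by
    rw [← hv2, ← hVW j j]
    exact ciInf_le (f := fun j => V ω j j) (Set.finite_range _).bddBelow j
  have hτ : 1 ≤ √(⨆ j, V ω j j) / v := by
    rw [one_le_div hv0]
    exact Real.sqrt_le_sqrt (ciInf_le_ciSup (f := fun j => V ω j j)
      (Set.finite_range _).bddBelow (Set.finite_range _).bddAbove)
  have hln : 0 < lnPlus d := lt_max_of_lt_left one_pos
  have hσ : ∀ i ∈ Finset.Icc 1 n, 0 ≤ ⨆ j, Q i ω j j := fun i hi =>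
    Real.iSup_nonneg fun j => (hQp i hi ω).diag_nonneg
  have hGpos : 0 < G := by
    have j0 : Fin d := Classical.arbitrary _
    have h0 : 0 < ∑ i ∈ Finset.Icc 1 n, Q i ω j0 j0 := by
      have := (pow_pos hv0 2).trans_le (hvV j0)
      simpa [hW, Matrix.sum_apply] using this
    obtain ⟨i, hi, hi0⟩ := Finset.exists_lt_of_sum_lt (s := Finset.Icc 1 n) (f := fun _ => (0 : ℝ))
      (g := fun i => Q i ω j0 j0) (by simpa using h0)
    have hs : 0 < ⨆ j, Q i ω j j :=
      hi0.trans_le (le_ciSup (f := fun j => Q i ω j j) (Set.finite_range _).bddAbove j0)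
    refine Finset.sum_pos' (fun i hi => add_nonneg (hx0 i)
      (Real.rpow_nonneg (mul_nonneg (hσ i hi) hln.le) _)) ⟨i, hi, ?_⟩
    exact add_pos_of_nonneg_of_pos (hx0 i) (Real.rpow_pos_of_pos (mul_pos hs hln) _)
  have hb : 0 ≤ b := Finset.sum_nonneg fun i _ => hb0 i
  have hd2 : (2 : ℝ) ≤ d := by exact_mod_cast hd
  have hl : 1 / 2 ≤ Real.log d := by
    have := Real.log_le_log two_pos hd2
    linarith [Real.log_two_gt_d9]
  have hL : Real.log d ≤ Real.log ((d : ℝ) * n) := by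
    have hn1 : (1 : ℝ) ≤ n := by exact_mod_cast hn
    exact Real.log_le_log (by linarith) (le_mul_of_one_le_right (by linarith) hn1)
  rw [hv2]
  refine MaxMart.optimise hK.le (by positivity : 0 ≤ 2 * A) hl hL hGpos hb hv0 hτ hα0 hα
    fun q hq => ciSup_le ?_
  refine MaxMart.abs_sub_le_of_rat (hFSc ω) (hFTc ω) fun r => ?_
  -- passing from one orthant to a slightly larger one costs at most the anticoncentration bound
  have shift : ∀ r : ℝ, (MaxMart.gaussN (W ω)).real {w | ∀ j, w j ≤ r + 2 * q} ≤
      (MaxMart.gaussN (W ω)).real {w | ∀ j, w j ≤ r} + 2 * A * (q / v * √(Real.log d)) := by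
    intro r
    have h1 := anti d hd (W ω) (hWp ω) v hv0 hvV r (2 * q) (by positivity)
    have h2 : {w : Fin d → ℝ | ∀ j, w j ≤ r + 2 * q} ⊆
        {w | ∀ j, w j ≤ r} ∪ {w | (∃ k, r < w k) ∧ ∀ k, w k ≤ r + 2 * q} := by
      intro w hw
      by_cases h : ∀ j, w j ≤ r
      · exact Or.inl h
      · push Not at h
        exact Or.inr ⟨h, hw⟩
    have h3 := (measureReal_mono (μ := MaxMart.gaussN (W ω)) h2).trans (measureReal_union_le _ _)
    have h4 : A * (2 * q / v * √(Real.log d)) = 2 * A * (q / v * √(Real.log d)) := by ring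
    linarith
  have s1 := shift r
  have s2 := shift (r - 2 * q)
  rw [sub_add_cancel] at s2
  obtain ⟨E, hE, u1, _⟩ := il q r hq
  obtain ⟨E', hE', _, u2⟩ := il q (r - 2 * q) hq
  have f1 := hFS' (r, 0)
  have f2 := hFS' (r - 2 * q, q)
  have c2 : (((r - 2 * q : ℚ) : ℝ)) = (r : ℝ) - 2 * q := by push_cast; ring
  simp only [Rat.cast_zero, mul_zero, add_zero] at f1
  simp only [c2, sub_add_cancel] at f2 u2
  rw [hFT' r]
  rw [← f1] at u1
  rw [← f2] at u2
  rw [hE'] at u2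
  rw [hE] at u1
  rw [abs_le]
  constructor <;> linarith
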